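/- Assume f satisfies lim_{R→∞} f(R, R, …, R) = ∞. Suppose u ∈ USC ∩ L^∞([0,T) × cl(Ω)) is a viscosity subsolution and v ∈ LSC ∩ L^∞([0,T) × cl(Ω)) is a viscosity supersolution of F(Hw) = e^{∂_t w + G(t,z,w)} g(z) in Ω_T, and both u and v are locally Lipschitz in the time variable t. Then sup_{Ω_T} (u − v) ≤ sup_{∂_P Ω_T} (u − v)₊, where ∂_P Ω_T = ({0} × cl(Ω)) ∪ ((0,T) × ∂Ω) and (·)₊ = max(·, 0). -/

import Mathlib

open Filter Topology Set

noncomputable section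

/-- The `l`-th elementary symmetric polynomial of `x ∈ ℝⁿ`. -/
def esym (n l : ℕ) (x : Fin n → ℝ) : ℝ :=
  ∑ s ∈ Finset.powersetCard l (Finset.univ : Finset (Fin n)), ∏ i ∈ s, x i

/-- The cone `Γ_k = {x ∈ ℝⁿ : σ_l(x) > 0 for all 1 ≤ l ≤ k}`. -/
def GammaK (n k : ℕ) : Set (Fin n → ℝ) :=
  {x | ∀ l, 1 ≤ l → l ≤ k → 0 < esym n l x}

/-- `Γ ⊊ ℝⁿ` is an open, convex, symmetric cone with vertex `0` and `Γₙ ⊆ Γ ⊆ Γ₁`. -/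
def IsGammaCone (n : ℕ) (Γ : Set (Fin n → ℝ)) : Prop :=
  IsOpen Γ ∧ Convex ℝ Γ ∧ (∀ x ∈ Γ, ∀ t : ℝ, 0 < t → t • x ∈ Γ) ∧
    (∀ σ : Equiv.Perm (Fin n), ∀ x ∈ Γ, x ∘ σ ∈ Γ) ∧
    Γ ≠ Set.univ ∧ GammaK n n ⊆ Γ ∧ Γ ⊆ GammaK n 1

/-- `f : cl(Γ) → [0,∞)` symmetric, concave, strictly increasing in each variable,
vanishing on `∂Γ`. -/
def IsHessianDensity (n : ℕ) (Γ : Set (Fin n → ℝ)) (f : (Fin n → ℝ) → ℝ) : Prop :=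
  (∀ x ∈ closure Γ, 0 ≤ f x) ∧
    (∀ σ : Equiv.Perm (Fin n), ∀ x ∈ closure Γ, f (x ∘ σ) = f x) ∧
    ConcaveOn ℝ (closure Γ) f ∧
    (∀ x ∈ closure Γ, ∀ y ∈ closure Γ, (∀ i, x i ≤ y i) → x ≠ y → f x < f y) ∧
    (∀ x ∈ frontier Γ, f x = 0)

/-- The complex Hessian `(∂²u/∂z_j∂z̄_k)_{j,k}` of a real-valued function on `ℂⁿ`,
computed from the real second derivative. -/
def complexHessian {n : ℕ} (u : (Fin n → ℂ) → ℝ) (z : Fin n → ℂ) :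
    Matrix (Fin n) (Fin n) ℂ := fun j k =>
  (((iteratedFDeriv ℝ 2 u z ![Pi.single j 1, Pi.single k 1] +
        iteratedFDeriv ℝ 2 u z ![Pi.single j Complex.I, Pi.single k Complex.I]) / 4 : ℝ) : ℂ) +
    Complex.I *
      (((iteratedFDeriv ℝ 2 u z ![Pi.single j 1, Pi.single k Complex.I] -
          iteratedFDeriv ℝ 2 u z ![Pi.single j Complex.I, Pi.single k 1]) / 4 : ℝ) : ℂ)

open Classical in
/-- `F(H) = f(λ(H))` if `λ(H) ∈ cl(Γ)` and `F(H) = −∞` otherwise. -/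
def Fop {n : ℕ} (f : (Fin n → ℝ) → ℝ) (Γ : Set (Fin n → ℝ))
    (A : Matrix (Fin n) (Fin n) ℂ) : EReal :=
  if h : A.IsHermitian then
    if h.eigenvalues ∈ closure Γ then ((f h.eigenvalues : ℝ) : EReal) else ⊥
  else ⊥

/-- An upper test function (C¹ in t, C² in z near `p₀`) for `u` at `p₀`. -/
def IsUpperTestAt {n : ℕ} (u q : ℝ × (Fin n → ℂ) → ℝ) (p₀ : ℝ × (Fin n → ℂ)) : Prop :=
  q p₀ = u p₀ ∧ (∀ᶠ p in 𝓝 p₀, u p ≤ q p) ∧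
    ∀ᶠ p in 𝓝 p₀, DifferentiableAt ℝ (fun t => q (t, p.2)) p.1 ∧
      ContDiffAt ℝ 2 (fun z => q (p.1, z)) p.2

/-- A lower test function (C¹ in t, C² in z near `p₀`) for `v` at `p₀`. -/
def IsLowerTestAt {n : ℕ} (v q : ℝ × (Fin n → ℂ) → ℝ) (p₀ : ℝ × (Fin n → ℂ)) : Prop :=
  q p₀ = v p₀ ∧ (∀ᶠ p in 𝓝 p₀, q p ≤ v p) ∧
    ∀ᶠ p in 𝓝 p₀, DifferentiableAt ℝ (fun t => q (t, p.2)) p.1 ∧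
      ContDiffAt ℝ 2 (fun z => q (p.1, z)) p.2

/-- Viscosity subsolution of `F(Hw) = e^{∂ₜw + G(t,z,w)} g(z)` on `D`. -/
def ParSubsolOn {n : ℕ} (f : (Fin n → ℝ) → ℝ) (Γ : Set (Fin n → ℝ))
    (G : ℝ → (Fin n → ℂ) → ℝ → ℝ) (g : (Fin n → ℂ) → ℝ)
    (D : Set (ℝ × (Fin n → ℂ))) (u : ℝ × (Fin n → ℂ) → ℝ) : Prop :=
  UpperSemicontinuousOn u D ∧
    ∀ p₀ ∈ D, ∀ q, IsUpperTestAt u q p₀ →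
      ((Real.exp (deriv (fun t => q (t, p₀.2)) p₀.1 + G p₀.1 p₀.2 (q p₀)) * g p₀.2 : ℝ) : EReal)
        ≤ Fop f Γ (complexHessian (fun z => q (p₀.1, z)) p₀.2)

/-- Viscosity supersolution of `F(Hw) = e^{∂ₜw + G(t,z,w)} g(z)` on `D`. -/
def ParSupersolOn {n : ℕ} (f : (Fin n → ℝ) → ℝ) (Γ : Set (Fin n → ℝ))
    (G : ℝ → (Fin n → ℂ) → ℝ → ℝ) (g : (Fin n → ℂ) → ℝ)
    (D : Set (ℝ × (Fin n → ℂ))) (v : ℝ × (Fin n → ℂ) → ℝ) : Prop :=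
  LowerSemicontinuousOn v D ∧
    ∀ p₀ ∈ D, ∀ q, IsLowerTestAt v q p₀ →
      Fop f Γ (complexHessian (fun z => q (p₀.1, z)) p₀.2)
        ≤ ((Real.exp (deriv (fun t => q (t, p₀.2)) p₀.1 + G p₀.1 p₀.2 (q p₀)) * g p₀.2 : ℝ) : EReal)

/-- Upper semicontinuous envelope relative to `D`. -/
def uscEnvOn {X : Type*} [TopologicalSpace X] (D : Set X) (w : X → ℝ) (x : X) : ℝ :=
  Filter.limsup w (𝓝[D] x)

/-- Lower semicontinuous envelope relative to `D`. -/
def lscEnvOn {X : Type*} [TopologicalSpace X] (D : Set X) (w : X → ℝ) (x : X) : ℝ :=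
  Filter.liminf w (𝓝[D] x)

/-- Sup-convolution in time `u^k`. -/
def supConv {n : ℕ} (u : ℝ × (Fin n → ℂ) → ℝ) (A k : ℝ) (p : ℝ × (Fin n → ℂ)) : ℝ :=
  sSup ((fun s : ℝ => u (p.1 + s, p.2) - k * |s|) '' Set.Icc (-(A / k)) (A / k))

/-- Inf-convolution in time `u_k`. -/
def infConv {n : ℕ} (u : ℝ × (Fin n → ℂ) → ℝ) (A k : ℝ) (p : ℝ × (Fin n → ℂ)) : ℝ :=
  sInf ((fun s : ℝ => u (p.1 + s, p.2) + k * |s|) '' Set.Icc (-(A / k)) (A / k))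

/-- Parabolic superjet `𝒫^{2,+} u (p₀)`; `p` and `Q` are the ℝ-linear first- and
second-order data on `ℂⁿ ≅ ℝ^{2n}`. -/
def InParSuperjet {n : ℕ} (u : ℝ × (Fin n → ℂ) → ℝ) (p₀ : ℝ × (Fin n → ℂ)) (τ : ℝ)
    (p : (Fin n → ℂ) →ₗ[ℝ] ℝ) (Q : (Fin n → ℂ) →ₗ[ℝ] (Fin n → ℂ) →ₗ[ℝ] ℝ) : Prop :=
  ∀ ε > 0, ∀ᶠ x in 𝓝 p₀,
    u x ≤ u p₀ + τ * (x.1 - p₀.1) + p (x.2 - p₀.2) +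
      (1 / 2) * Q (x.2 - p₀.2) (x.2 - p₀.2) + ε * (|x.1 - p₀.1| + ‖x.2 - p₀.2‖ ^ 2)

/-- Parabolic subjet `𝒫^{2,−} v (p₀) = −𝒫^{2,+}(−v)(p₀)`. -/
def InParSubjet {n : ℕ} (v : ℝ × (Fin n → ℂ) → ℝ) (p₀ : ℝ × (Fin n → ℂ)) (τ : ℝ)
    (p : (Fin n → ℂ) →ₗ[ℝ] ℝ) (Q : (Fin n → ℂ) →ₗ[ℝ] (Fin n → ℂ) →ₗ[ℝ] ℝ) : Prop :=
  InParSuperjet (fun x => -(v x)) p₀ (-τ) (-p) (-Q)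

/-- An upper test function (C² near `z₀`) for `ψ` at `z₀` (elliptic case). -/
def IsUpperTestAtE {n : ℕ} (ψ q : (Fin n → ℂ) → ℝ) (z₀ : Fin n → ℂ) : Prop :=
  q z₀ = ψ z₀ ∧ (∀ᶠ z in 𝓝 z₀, ψ z ≤ q z) ∧ ContDiffAt ℝ 2 q z₀

/-- A lower test function (C² near `z₀`) for `ψ` at `z₀` (elliptic case). -/
def IsLowerTestAtE {n : ℕ} (ψ q : (Fin n → ℂ) → ℝ) (z₀ : Fin n → ℂ) : Prop :=
  q z₀ = ψ z₀ ∧ (∀ᶠ z in 𝓝 z₀, q z ≤ ψ z) ∧ ContDiffAt ℝ 2 q z₀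

/-- `ψ` is `Γ`-subharmonic on `D` in the viscosity sense: `F(Hψ) ≥ 0`. -/
def GammaSubharmonicOn {n : ℕ} (Γ : Set (Fin n → ℝ)) (D : Set (Fin n → ℂ))
    (ψ : (Fin n → ℂ) → ℝ) : Prop :=
  ∀ z₀ ∈ D, ∀ q, IsUpperTestAtE ψ q z₀ →
    ∃ hh : (complexHessian q z₀).IsHermitian, hh.eigenvalues ∈ closure Γ

/-- Viscosity subsolution of the elliptic equation `e^{K(z,ψ)} − F(Hψ) = 0` on `D`,
where the right-hand side `K z₀ (q z₀)` may depend on the tested value. -/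
def EllSubsolOn {n : ℕ} (f : (Fin n → ℝ) → ℝ) (Γ : Set (Fin n → ℝ))
    (K : (Fin n → ℂ) → ℝ → ℝ) (D : Set (Fin n → ℂ)) (ψ : (Fin n → ℂ) → ℝ) : Prop :=
  UpperSemicontinuousOn ψ D ∧
    ∀ z₀ ∈ D, ∀ q, IsUpperTestAtE ψ q z₀ →
      ((K z₀ (q z₀) : ℝ) : EReal) ≤ Fop f Γ (complexHessian q z₀)

/-- Viscosity subsolution of the time-derivative-free parabolic equation
`e^{H(t,z,w)} h(t,z) − F(Hw) = 0` on `D`. -/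
def ParSubsolNoDtOn {n : ℕ} (f : (Fin n → ℝ) → ℝ) (Γ : Set (Fin n → ℝ))
    (Hf : ℝ → (Fin n → ℂ) → ℝ → ℝ) (h : ℝ × (Fin n → ℂ) → ℝ)
    (D : Set (ℝ × (Fin n → ℂ))) (w : ℝ × (Fin n → ℂ) → ℝ) : Prop :=
  UpperSemicontinuousOn w D ∧
    ∀ p₀ ∈ D, ∀ q, IsUpperTestAt w q p₀ →
      ((Real.exp (Hf p₀.1 p₀.2 (q p₀)) * h p₀ : ℝ) : EReal)
        ≤ Fop f Γ (complexHessian (fun z => q (p₀.1, z)) p₀.2)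

/-- Subsolution of the Cauchy–Dirichlet problem. -/
def CDSubsol {n : ℕ} (f : (Fin n → ℝ) → ℝ) (Γ : Set (Fin n → ℝ))
    (G : ℝ → (Fin n → ℂ) → ℝ → ℝ) (g : (Fin n → ℂ) → ℝ)
    (Ω : Set (Fin n → ℂ)) (T : ℝ) (φ : ℝ → (Fin n → ℂ) → ℝ)
    (u₀ : (Fin n → ℂ) → ℝ) (u : ℝ × (Fin n → ℂ) → ℝ) : Prop :=
  UpperSemicontinuousOn u (Set.Ico 0 T ×ˢ closure Ω) ∧
    ParSubsolOn f Γ G g (Set.Ioo 0 T ×ˢ Ω) u ∧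
    (∀ t ∈ Set.Ico (0 : ℝ) T, ∀ z ∈ frontier Ω, u (t, z) ≤ φ t z) ∧
    (∀ z ∈ closure Ω, u (0, z) ≤ u₀ z)

/-- Supersolution of the Cauchy–Dirichlet problem. -/
def CDSupersol {n : ℕ} (f : (Fin n → ℝ) → ℝ) (Γ : Set (Fin n → ℝ))
    (G : ℝ → (Fin n → ℂ) → ℝ → ℝ) (g : (Fin n → ℂ) → ℝ)
    (Ω : Set (Fin n → ℂ)) (T : ℝ) (φ : ℝ → (Fin n → ℂ) → ℝ)
    (u₀ : (Fin n → ℂ) → ℝ) (v : ℝ × (Fin n → ℂ) → ℝ) : Prop :=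
  LowerSemicontinuousOn v (Set.Ico 0 T ×ˢ closure Ω) ∧
    ParSupersolOn f Γ G g (Set.Ioo 0 T ×ˢ Ω) v ∧
    (∀ t ∈ Set.Ico (0 : ℝ) T, ∀ z ∈ frontier Ω, φ t z ≤ v (t, z)) ∧
    (∀ z ∈ closure Ω, u₀ z ≤ v (0, z))

/-- `ε`-subbarrier for the Cauchy–Dirichlet problem. -/
def SubBarrier {n : ℕ} (f : (Fin n → ℝ) → ℝ) (Γ : Set (Fin n → ℝ))
    (G : ℝ → (Fin n → ℂ) → ℝ → ℝ) (g : (Fin n → ℂ) → ℝ)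
    (Ω : Set (Fin n → ℂ)) (T : ℝ) (φ : ℝ → (Fin n → ℂ) → ℝ)
    (u₀ : (Fin n → ℂ) → ℝ) (ε : ℝ) (u : ℝ × (Fin n → ℂ) → ℝ) : Prop :=
  UpperSemicontinuousOn u (Set.Ico 0 T ×ˢ closure Ω) ∧
    ParSubsolOn f Γ G g (Set.Ioo 0 T ×ˢ Ω) u ∧
    (∀ z ∈ closure Ω,
      u₀ z - ε ≤ lscEnvOn (Set.Ico 0 T ×ˢ closure Ω) u (0, z) ∧
        lscEnvOn (Set.Ico 0 T ×ˢ closure Ω) u (0, z) ≤ u (0, z) ∧ u (0, z) ≤ u₀ z) ∧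
    (∀ t ∈ Set.Ico (0 : ℝ) T, ∀ z ∈ frontier Ω,
      φ t z - ε ≤ lscEnvOn (Set.Ico 0 T ×ˢ closure Ω) u (t, z) ∧
        lscEnvOn (Set.Ico 0 T ×ˢ closure Ω) u (t, z) ≤ u (t, z) ∧ u (t, z) ≤ φ t z)

/-- `ε`-superbarrier for the Cauchy–Dirichlet problem. -/
def SuperBarrier {n : ℕ} (f : (Fin n → ℝ) → ℝ) (Γ : Set (Fin n → ℝ))
    (G : ℝ → (Fin n → ℂ) → ℝ → ℝ) (g : (Fin n → ℂ) → ℝ)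
    (Ω : Set (Fin n → ℂ)) (T : ℝ) (φ : ℝ → (Fin n → ℂ) → ℝ)
    (u₀ : (Fin n → ℂ) → ℝ) (ε : ℝ) (v : ℝ × (Fin n → ℂ) → ℝ) : Prop :=
  LowerSemicontinuousOn v (Set.Ico 0 T ×ˢ closure Ω) ∧
    ParSupersolOn f Γ G g (Set.Ioo 0 T ×ˢ Ω) v ∧
    (∀ z ∈ closure Ω,
      uscEnvOn (Set.Ico 0 T ×ˢ closure Ω) v (0, z) ≤ u₀ z + ε ∧
        v (0, z) ≤ uscEnvOn (Set.Ico 0 T ×ˢ closure Ω) v (0, z) ∧ u₀ z ≤ v (0, z)) ∧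
    (∀ t ∈ Set.Ico (0 : ℝ) T, ∀ z ∈ frontier Ω,
      uscEnvOn (Set.Ico 0 T ×ˢ closure Ω) v (t, z) ≤ φ t z + ε ∧
        v (t, z) ≤ uscEnvOn (Set.Ico 0 T ×ˢ closure Ω) v (t, z) ∧ φ t z ≤ v (t, z))

/-- Lipschitz in the time variable, uniformly on `[0,T) × cl(Ω)`. -/
def LipschitzInT {n : ℕ} (Ω : Set (Fin n → ℂ)) (T : ℝ) (u : ℝ × (Fin n → ℂ) → ℝ) : Prop :=
  ∃ L : ℝ, ∀ t₁ ∈ Set.Ico (0 : ℝ) T, ∀ t₂ ∈ Set.Ico (0 : ℝ) T, ∀ z ∈ closure Ω,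
    |u (t₁, z) - u (t₂, z)| ≤ L * |t₁ - t₂|

/-- The pair `(u₀, g)` is admissible. -/
def Admissible {n : ℕ} (f : (Fin n → ℝ) → ℝ) (Γ : Set (Fin n → ℝ))
    (Ω : Set (Fin n → ℂ)) (g u₀ : (Fin n → ℂ) → ℝ) : Prop :=
  ∀ ε > 0, ∃ uε : (Fin n → ℂ) → ℝ, ∃ Cε > 0,
    ContinuousOn uε (closure Ω) ∧ (∀ z ∈ closure Ω, u₀ z ≤ uε z ∧ uε z ≤ u₀ z + ε) ∧
      ∀ z₀ ∈ Ω, ∀ q, IsLowerTestAtE uε q z₀ →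
        Fop f Γ (complexHessian q z₀) ≤ ((Real.exp Cε * g z₀ : ℝ) : EReal)

/-- `Ω` is a strictly `Γ`-pseudoconvex domain. -/
def StrictlyGammaPseudoconvex {n : ℕ} (Γ : Set (Fin n → ℝ)) (Ω : Set (Fin n → ℂ)) : Prop :=
  ∃ ρ : (Fin n → ℂ) → ℝ, ContDiff ℝ (⊤ : ℕ∞) ρ ∧
    (∀ z ∈ closure Ω, ∃ hh : (complexHessian ρ z).IsHermitian, hh.eigenvalues ∈ Γ) ∧
    (∀ z ∈ frontier Ω, ρ z = 0) ∧ (∀ z ∈ Ω, ρ z < 0) ∧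
    ∀ z ∈ frontier Ω, fderiv ℝ ρ z ≠ 0

end

/-! Suppose `u - v` exceeds its supremum over the parabolic boundary at some point. Since `f` is
concave and `f (R, …, R)` is large, `(1 - s) u + s ((R + 1) |z|² - c)` is a subsolution with slack
`s`. Doubling the variables in the difference of this function and `v`, Jensen's lemma and
Alexandrov's theorem applied to sup-convolutions give, for penalizations tending to infinity,
second-order jets of the two functions at nearby points with ordered Hessians and time slopes
whose difference tends to zero. Testing the equation with these jets bounds the slack by a
difference of two right-hand sides. As `v` is Lipschitz in time its time slopes are bounded above,
so the exponentials do not blow up and this difference tends to zero, a contradiction. -/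

/-! ### Second-order jets -/

section Jets

variable {P Q : Type*} [NormedAddCommGroup P] [NormedSpace ℝ P]
  [NormedAddCommGroup Q] [NormedSpace ℝ Q]

theorem le_of_eventually_le_add_mul {a b c : ℝ} (h : ∀ᶠ t in 𝓝[>] (0 : ℝ), a ≤ b + t * c) :
    a ≤ b := by
  have hlim : Tendsto (fun t : ℝ => b + t * c) (𝓝[>] 0) (𝓝 (b + 0 * c)) :=
    (by fun_prop : Continuous fun t : ℝ => b + t * c).continuousWithinAt
  simpa only [zero_mul, add_zero] using ge_of_tendsto hlim h

/-- Second-order superjets relative to a set: `(π, X) ∈ J^{2,+}_K u(y)`. The quadratic form is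
stored as a symmetric bilinear form. -/
structure IsSuperjetWithin (u : P → ℝ) (K : Set P) (y : P) (π : P →L[ℝ] ℝ)
    (X : P →L[ℝ] P →L[ℝ] ℝ) : Prop where
  symm : ∀ h k, X h k = X k h
  eventually_le : ∀ η > 0, ∀ᶠ z in 𝓝[K] y,
    u z ≤ u y + π (z - y) + X (z - y) (z - y) / 2 + η * ‖z - y‖ ^ 2

/-- Second-order subjets relative to a set: `(π, X) ∈ J^{2,-}_K v(y)`. -/
def IsSubjetWithin (v : P → ℝ) (K : Set P) (y : P) (π : P →L[ℝ] ℝ)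
    (X : P →L[ℝ] P →L[ℝ] ℝ) : Prop :=
  IsSuperjetWithin (fun z => -v z) K y (-π) (-X)

variable {u u₁ u₂ v : P → ℝ} {K : Set P} {y : P} {π π₁ π₂ : P →L[ℝ] ℝ}
  {X X₁ X₂ : P →L[ℝ] P →L[ℝ] ℝ}

theorem IsSuperjetWithin.of_forall_le (hX : ∀ h k, X h k = X k h)
    (hu : ∀ z, u z ≤ u y + π (z - y) + X (z - y) (z - y) / 2) : IsSuperjetWithin u K y π X where
  symm := hX
  eventually_le η hη := Eventually.of_forall fun z =>
    (hu z).trans (le_add_of_nonneg_right (by positivity))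

theorem isSuperjetWithin_apply_self_div_two (hX : ∀ h k, X h k = X k h) (K : Set P) (y : P) :
    IsSuperjetWithin (fun z => X z z / 2) K y (X y) X :=
  .of_forall_le hX fun z => le_of_eq <| by
    simp only [map_sub, sub_apply, hX z y]
    ring

theorem IsSuperjetWithin.add (h₁ : IsSuperjetWithin u₁ K y π₁ X₁)
    (h₂ : IsSuperjetWithin u₂ K y π₂ X₂) :
    IsSuperjetWithin (fun z => u₁ z + u₂ z) K y (π₁ + π₂) (X₁ + X₂) where
  symm h k := by simp only [add_apply, h₁.symm h k, h₂.symm h k]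
  eventually_le η hη := by
    filter_upwards [h₁.eventually_le (η / 2) (half_pos hη),
      h₂.eventually_le (η / 2) (half_pos hη)] with z hz₁ hz₂
    simp only [add_apply]
    linarith

theorem IsSuperjetWithin.const_mul {c : ℝ} (hc : 0 < c) (h : IsSuperjetWithin u K y π X) :
    IsSuperjetWithin (fun z => c * u z) K y (c • π) (c • X) where
  symm a b := by simp only [smul_apply, h.symm a b]
  eventually_le η hη := by
    filter_upwards [h.eventually_le (η / c) (div_pos hη hc)] with z hz
    have hcz := mul_le_mul_of_nonneg_left hz hc.le
    have hη' : c * (η / c) = η := mul_div_cancel₀ η hc.ne'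
    simp only [smul_apply, smul_eq_mul]
    linear_combination hcz + ‖z - y‖ ^ 2 * hη'

theorem IsSuperjetWithin.congr (h : IsSuperjetWithin u K y π X) (hu : ∀ z, u₁ z = u z) :
    IsSuperjetWithin u₁ K y π X := by rwa [funext hu]

theorem IsSuperjetWithin.isSubjetWithin_neg (h : IsSuperjetWithin (fun z => -v z) K y π X) :
    IsSubjetWithin v K y (-π) (-X) := by
  rw [IsSubjetWithin]
  convert h using 1 <;> module

theorem IsSuperjetWithin.comp_equiv {u : P → ℝ} {K : Set P} {y : Q} {π : Q →L[ℝ] ℝ}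
    {X : Q →L[ℝ] Q →L[ℝ] ℝ} (Φ : P ≃L[ℝ] Q)
    (h : IsSuperjetWithin (u ∘ Φ.symm) (Φ.symm ⁻¹' K) y π X) :
    IsSuperjetWithin u K (Φ.symm y) (π ∘L (Φ : P →L[ℝ] Q))
      (X.bilinearComp (Φ : P →L[ℝ] Q) (Φ : P →L[ℝ] Q)) where
  symm a b := h.symm _ _
  eventually_le η hη := by
    set c := ‖(Φ : P →L[ℝ] Q)‖ ^ 2 + 1
    have hmaps : Tendsto Φ (𝓝[K] Φ.symm y) (𝓝[Φ.symm ⁻¹' K] y) := by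
      refine tendsto_nhdsWithin_iff.2 ⟨?_, ?_⟩
      · simpa only [Φ.apply_symm_apply] using
          (Φ.continuous.continuousWithinAt (s := K) (x := Φ.symm y)).tendsto
      · filter_upwards [self_mem_nhdsWithin] with z hz
        simpa only [mem_preimage, Φ.symm_apply_apply] using hz
    filter_upwards [hmaps.eventually (h.eventually_le (η / c) (by positivity))] with z hz
    have hΦ : Φ z - y = Φ (z - Φ.symm y) := by rw [map_sub, Φ.apply_symm_apply]
    have hnorm : η / c * ‖Φ (z - Φ.symm y)‖ ^ 2 ≤ η * ‖z - Φ.symm y‖ ^ 2 := by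
      have hle := pow_le_pow_left₀ (norm_nonneg _)
        ((Φ : P →L[ℝ] Q).le_opNorm (z - Φ.symm y)) 2
      rw [div_mul_eq_mul_div, div_le_iff₀ (by positivity), mul_assoc]
      refine mul_le_mul_of_nonneg_left (hle.trans ?_) hη.le
      rw [mul_pow]
      nlinarith [sq_nonneg ‖z - Φ.symm y‖]
    simp only [Function.comp_apply, Φ.symm_apply_apply, hΦ] at hz
    exact hz.trans (add_le_add_right hnorm _)

theorem IsSubjetWithin.comp_equiv {v : P → ℝ} {K : Set P} {y : Q} {π : Q →L[ℝ] ℝ}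
    {X : Q →L[ℝ] Q →L[ℝ] ℝ} (Φ : P ≃L[ℝ] Q)
    (h : IsSubjetWithin (v ∘ Φ.symm) (Φ.symm ⁻¹' K) y π X) :
    IsSubjetWithin v K (Φ.symm y) (π ∘L (Φ : P →L[ℝ] Q))
      (X.bilinearComp (Φ : P →L[ℝ] Q) (Φ : P →L[ℝ] Q)) :=
  IsSuperjetWithin.comp_equiv (u := fun z => -v z) Φ h

theorem IsSubjetWithin.eventually_le_add_smul (h : IsSubjetWithin v K y π X) (hK : K ∈ 𝓝 y)
    {η : ℝ} (hη : 0 < η) (a : P) :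
    ∀ᶠ t in 𝓝[>] (0 : ℝ), v y + t * π a + t ^ 2 * (X a a / 2 - η * ‖a‖ ^ 2) ≤ v (y + t • a) := by
  have hjet := h.eventually_le η hη
  rw [nhdsWithin_eq_nhds.2 hK] at hjet
  have hray : Tendsto (fun t : ℝ => y + t • a) (𝓝[>] 0) (𝓝 y) := by
    simpa only [zero_smul, add_zero] using
      ((by fun_prop : Continuous fun t : ℝ => y + t • a).continuousWithinAt
        (s := Ioi 0) (x := 0)).tendsto
  filter_upwards [hray.eventually hjet] with t ht
  simp only [add_sub_cancel_left, neg_apply, map_smul,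
    smul_apply, smul_eq_mul, norm_smul, mul_pow, Real.norm_eq_abs,
    sq_abs] at ht
  linear_combination ht

theorem IsSubjetWithin.apply_le (h : IsSubjetWithin v K y π X) (hK : K ∈ 𝓝 y) {a : P} {L : ℝ}
    (hL : ∀ᶠ t in 𝓝[>] (0 : ℝ), v (y + t • a) ≤ v y + t * L) : π a ≤ L := by
  refine le_of_eventually_le_add_mul (c := 1 * ‖a‖ ^ 2 - X a a / 2) ?_
  filter_upwards [h.eventually_le_add_smul hK one_pos a, hL, self_mem_nhdsWithin]
    with t hjet hlip ht
  refine le_of_mul_le_mul_left ?_ (mem_Ioi.1 ht)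
  linear_combination hjet + hlip

theorem IsSubjetWithin.second_order_necessary (h : IsSubjetWithin v univ y π X)
    (hmax : ∀ z, v z ≤ v y) : π = 0 ∧ ∀ a, X a a ≤ 0 := by
  have hπ : ∀ a, π a ≤ 0 := fun a => h.apply_le univ_mem
    (Eventually.of_forall fun t => by simpa using hmax (y + t • a))
  have hπ0 : π = 0 := ContinuousLinearMap.ext fun a =>
    le_antisymm (hπ a) (by simpa using hπ (-a))
  refine ⟨hπ0, fun a => le_of_eventually_le_add_mul (c := 2 * ‖a‖ ^ 2) ?_⟩
  filter_upwards [self_mem_nhdsWithin] with η hη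
  obtain ⟨t, hjet, ht⟩ :=
    ((h.eventually_le_add_smul univ_mem (mem_Ioi.1 hη) a).and self_mem_nhdsWithin).exists
  rw [hπ0, zero_apply, mul_zero, add_zero] at hjet
  have hle : X a a / 2 - η * ‖a‖ ^ 2 ≤ 0 :=
    nonpos_of_mul_nonpos_right (by linarith [hmax (y + t • a)]) (pow_pos (mem_Ioi.1 ht) 2)
  linarith

theorem IsSubjetWithin.add_eq_and_add_nonpos (h₁ : IsSubjetWithin u₁ univ y π₁ X₁)
    (h₂ : IsSubjetWithin u₂ univ y π₂ X₂) {ℓ : P →L[ℝ] ℝ}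
    (hmax : IsMaxOn (fun z => u₁ z + u₂ z - ℓ z) univ y) :
    π₁ + π₂ = ℓ ∧ ∀ a, X₁ a a + X₂ a a ≤ 0 := by
  have hℓ : IsSuperjetWithin (fun z => ℓ z) univ y ℓ 0 := .of_forall_le (fun _ _ => rfl)
    fun z => le_of_eq (by rw [zero_apply, zero_apply, map_sub]; ring)
  have hsub : IsSubjetWithin (fun z => u₁ z + u₂ z - ℓ z) univ y (π₁ + π₂ - ℓ) (X₁ + X₂) := by
    have hsum := (IsSuperjetWithin.add (IsSuperjetWithin.add h₁ h₂) hℓ).congr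
      (u₁ := fun z => -(u₁ z + u₂ z - ℓ z)) fun z => by ring
    rw [IsSubjetWithin]
    convert hsum using 1 <;> module
  obtain ⟨hπ, hX⟩ := hsub.second_order_necessary fun z => hmax (mem_univ z)
  exact ⟨sub_eq_zero.1 hπ, hX⟩

end Jets

/-! ### Subgradients, proximal maps and Alexandrov's theorem -/

theorem sub_le_of_forall_sub_le_add_sq {e : ℝ → ℝ} {A B : ℝ}
    (h : ∀ s t, 0 ≤ s → s ≤ t → t ≤ 1 → e t - e s ≤ A * (t - s) + B * (t - s) ^ 2) :
    e 1 - e 0 ≤ A := by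
  have hsum : ∀ N : ℕ, e 1 - e 0 ≤ A + B * (1 / ((N : ℝ) + 1)) := by
    intro N
    have hN : (0 : ℝ) < N + 1 := by positivity
    have hstep : ∀ i ∈ Finset.range (N + 1),
        e ((i + 1 : ℕ) / ((N : ℝ) + 1)) - e ((i : ℕ) / ((N : ℝ) + 1)) ≤
          A * (1 / ((N : ℝ) + 1)) + B * (1 / ((N : ℝ) + 1)) ^ 2 := by
      intro i hi
      have hdiff : ((i + 1 : ℕ) : ℝ) / ((N : ℝ) + 1) - i / ((N : ℝ) + 1) = 1 / ((N : ℝ) + 1) := by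
        push_cast; ring
      simpa only [hdiff] using h (i / ((N : ℝ) + 1)) ((i + 1 : ℕ) / ((N : ℝ) + 1)) (by positivity)
        (by gcongr; exact i.le_succ)
        ((div_le_one hN).2 (by exact_mod_cast Finset.mem_range.1 hi))
    have htotal := Finset.sum_le_sum hstep
    rw [Finset.sum_range_sub (fun i : ℕ => e (i / ((N : ℝ) + 1))), Finset.sum_const,
      Finset.card_range, nsmul_eq_mul] at htotal
    push_cast at htotal
    rw [div_self hN.ne', zero_div] at htotal
    refine htotal.trans_eq ?_
    field_simp
  have hlim : Tendsto (fun N : ℕ => A + B * (1 / ((N : ℝ) + 1))) atTop (𝓝 (A + B * 0)) :=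
    (tendsto_one_div_add_atTop_nhds_zero_nat.const_mul B).const_add A
  simpa only [mul_zero, add_zero] using ge_of_tendsto' hlim hsum

section ConvexAnalysis

open MeasureTheory

variable {E : Type*} [NormedAddCommGroup E] [InnerProductSpace ℝ E]

/-- `p ∈ ∂φ(y)`: the vector `p` is a (global) subgradient of `φ` at `y`. -/
def IsSubgradientAt (φ : E → ℝ) (y p : E) : Prop := ∀ z, φ y + inner ℝ p (z - y) ≤ φ z

theorem IsSubgradientAt.inner_sub_sub_nonneg {φ : E → ℝ} {y p y' p' : E}
    (h : IsSubgradientAt φ y p) (h' : IsSubgradientAt φ y' p') :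
    0 ≤ inner ℝ (p - p') (y - y') := by
  have hyy' := h y'
  rw [← neg_sub y y', inner_neg_right] at hyy'
  rw [inner_sub_left]
  linarith [h' y]

theorem IsSubgradientAt.add {φ ψ : E → ℝ} {y p q : E} (hφ : IsSubgradientAt φ y p)
    (hψ : IsSubgradientAt ψ y q) : IsSubgradientAt (fun z => φ z + ψ z) y (p + q) := fun z => by
  rw [inner_add_left]
  linarith [hφ z, hψ z]

theorem convexOn_of_exists_isSubgradientAt {φ : E → ℝ}
    (hφ : ∀ y, ∃ p, IsSubgradientAt φ y p) : ConvexOn ℝ univ φ := by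
  refine ⟨convex_univ, fun x _ y _ a b ha hb hab => ?_⟩
  obtain ⟨p, hp⟩ := hφ (a • x + b • y)
  have hzero : a * inner ℝ p (x - (a • x + b • y)) + b * inner ℝ p (y - (a • x + b • y)) = 0 := by
    rw [← real_inner_smul_right, ← real_inner_smul_right, ← inner_add_right]
    convert inner_zero_right p using 2
    rw [← eq_sub_iff_add_eq] at hab
    subst hab
    module
  have hx := mul_le_mul_of_nonneg_left (hp x) ha
  have hy := mul_le_mul_of_nonneg_left (hp y) hb
  simp only [smul_eq_mul]
  linear_combination hx + hy + hab * (-φ (a • x + b • y)) - hzero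

theorem continuous_of_exists_isSubgradientAt [FiniteDimensional ℝ E] {φ : E → ℝ}
    (hφ : ∀ y, ∃ p, IsSubgradientAt φ y p) : Continuous φ :=
  continuousOn_univ.1 ((convexOn_of_exists_isSubgradientAt hφ).continuousOn isOpen_univ)

/-- `J = (1 + ∂φ)⁻¹`, the proximal map of a convex function `φ`. -/
def IsProximalMap (φ : E → ℝ) (J : E → E) : Prop := ∀ x, IsSubgradientAt φ (J x) (x - J x)

theorem exists_isProximalMap [FiniteDimensional ℝ E] {φ : E → ℝ}
    (hφ : ∀ y, ∃ p, IsSubgradientAt φ y p) : ∃ J, IsProximalMap φ J := by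
  suffices hx : ∀ x, ∃ y, IsSubgradientAt φ y (x - y) from Classical.skolem.1 hx
  intro x
  have hcont : Continuous fun y => φ y + ‖x - y‖ ^ 2 / 2 := by
    have := continuous_of_exists_isSubgradientAt hφ
    fun_prop
  obtain ⟨p, hp⟩ := hφ x
  have hcoercive : ∀ᶠ y in cocompact E, φ x + ‖x - x‖ ^ 2 / 2 ≤ φ y + ‖x - y‖ ^ 2 / 2 := by
    filter_upwards [(tendsto_dist_left_cocompact_atTop x).eventually_ge_atTop (2 * ‖p‖)] with y hy
    rw [dist_eq_norm] at hy
    have hinner := neg_le_of_abs_le (abs_real_inner_le_norm p (y - x))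
    rw [norm_sub_rev y x] at hinner
    rw [sub_self, norm_zero]
    nlinarith [hp y, norm_nonneg (x - y)]
  obtain ⟨y, hy⟩ := hcont.exists_forall_le' x hcoercive
  refine ⟨y, fun z => le_of_eventually_le_add_mul (c := ‖z - y‖ ^ 2 / 2) ?_⟩
  filter_upwards [Ioo_mem_nhdsGT (one_pos (α := ℝ))] with t ht
  have hconv := (convexOn_of_exists_isSubgradientAt hφ).2 (mem_univ y) (mem_univ z)
    (sub_nonneg.2 ht.2.le) ht.1.le (sub_add_cancel 1 t)
  have hmin := hy ((1 - t) • y + t • z)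
  have hexp : x - ((1 - t) • y + t • z) = (x - y) - t • (z - y) := by module
  rw [hexp, norm_sub_sq_real (x - y), inner_smul_right, norm_smul, mul_pow, Real.norm_eq_abs,
    sq_abs] at hmin
  simp only [smul_eq_mul] at hconv
  refine le_of_mul_le_mul_left ?_ ht.1
  linear_combination hmin + hconv

variable {φ : E → ℝ} {J : E → E}

theorem IsProximalMap.norm_sub_sq_le (hJ : IsProximalMap φ J) (a b : E) :
    ‖J a - J b‖ ^ 2 ≤ inner ℝ (J a - J b) (a - b) := by
  have hmono := (hJ a).inner_sub_sub_nonneg (hJ b)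
  rw [sub_sub_sub_comm, inner_sub_left, real_inner_self_eq_norm_sq, real_inner_comm] at hmono
  linarith

theorem IsProximalMap.lipschitzWith (hJ : IsProximalMap φ J) : LipschitzWith 1 J := by
  refine LipschitzWith.of_dist_le_mul fun a b => ?_
  rw [dist_eq_norm, dist_eq_norm, NNReal.coe_one, one_mul]
  have hle := (hJ.norm_sub_sq_le a b).trans (real_inner_le_norm _ _)
  by_contra! hlt
  nlinarith [norm_nonneg (a - b)]

theorem IsProximalMap.apply_add (hJ : IsProximalMap φ J) {y p : E} (hp : IsSubgradientAt φ y p) :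
    J (y + p) = y := by
  have hmono := hp.inner_sub_sub_nonneg (hJ (y + p))
  have hdiff : p - (y + p - J (y + p)) = -(y - J (y + p)) := by abel
  rw [hdiff, inner_neg_left, real_inner_self_eq_norm_sq] at hmono
  have hzero : ‖y - J (y + p)‖ = 0 := pow_eq_zero_iff two_ne_zero |>.1
    (le_antisymm (by linarith) (sq_nonneg _))
  exact (sub_eq_zero.1 (norm_eq_zero.1 hzero)).symm

theorem inner_sub_le_inner_sub_of_monotone (hJ : ∀ a b, 0 ≤ inner ℝ (J a - J b) (a - b))
    (x z : E) {t : ℝ} (ht : t ≤ 1) :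
    inner ℝ (J (x + t • (z - x)) - J x) (z - x) ≤ inner ℝ (J z - J x) (z - x) := by
  rcases ht.eq_or_lt with rfl | ht
  · rw [one_smul, add_sub_cancel]
  have hmono := hJ z (x + t • (z - x))
  have hdiff : z - (x + t • (z - x)) = (1 - t) • (z - x) := by module
  rw [hdiff, real_inner_smul_right] at hmono
  have hnonneg := nonneg_of_mul_nonneg_right hmono (sub_pos.2 ht)
  rw [← sub_nonneg, ← inner_sub_left, sub_sub_sub_cancel_right]
  exact hnonneg

-- Monotonicity along rays propagates the local expansion of `J` at `x` to the whole space.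
theorem comap_nhds_le_of_isBigO_sub (hJ : ∀ a b, ‖J a - J b‖ ^ 2 ≤ inner ℝ (J a - J b) (a - b))
    {x : E} (hx : (fun z => z - x) =O[𝓝 x] fun z => J z - J x) :
    comap J (𝓝 (J x)) ≤ 𝓝 x := by
  obtain ⟨C, hC, hexpand⟩ := hx.exists_pos
  obtain ⟨r₀, hr₀, hexpand⟩ := Metric.eventually_nhds_iff.1 hexpand.bound
  refine Metric.nhds_basis_ball.ge_iff.2 fun ε hε => ?_
  obtain ⟨r, hr, hrr₀, hrε⟩ : ∃ r, 0 < r ∧ r < r₀ ∧ r ≤ ε :=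
    ⟨min (r₀ / 2) ε, by positivity, by linarith [min_le_left (r₀ / 2) ε, half_lt_self hr₀],
      min_le_right _ _⟩
  refine mem_comap.2 ⟨_, Metric.ball_mem_nhds (J x) (show 0 < r / C ^ 2 by positivity),
    fun z hz => ?_⟩
  rw [mem_preimage, mem_ball_iff_norm, lt_div_iff₀ (by positivity)] at hz
  rw [mem_ball_iff_norm]
  by_contra! hfar
  have hzx : 0 < ‖z - x‖ := hε.trans_le hfar
  set t := r / ‖z - x‖ with ht
  have ht0 : 0 ≤ t := by positivity
  set w := x + t • (z - x)
  have hwx : w - x = t • (z - x) := add_sub_cancel_left _ _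
  have hwr : ‖w - x‖ = r := by
    rw [hwx, norm_smul, Real.norm_of_nonneg ht0, div_mul_cancel₀ _ hzx.ne']
  have hwJ : r ≤ C * ‖J w - J x‖ := by
    rw [← hwr]
    exact hexpand (by rwa [dist_eq_norm, hwr])
  have hJw : ‖J w - J x‖ ^ 2 ≤ r * ‖J z - J x‖ :=
    calc ‖J w - J x‖ ^ 2 ≤ t * inner ℝ (J w - J x) (z - x) := by
          simpa only [hwx, real_inner_smul_right] using hJ w x
      _ ≤ t * (‖J z - J x‖ * ‖z - x‖) := by
          refine mul_le_mul_of_nonneg_left ?_ ht0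
          exact (inner_sub_le_inner_sub_of_monotone (fun a b => (sq_nonneg _).trans (hJ a b)) x z
            ((div_le_one hzx).2 (hrε.trans hfar))).trans (real_inner_le_norm _ _)
      _ = r * ‖J z - J x‖ := by rw [ht]; field_simp
  have hsq : r ^ 2 ≤ r * (‖J z - J x‖ * C ^ 2) :=
    calc r ^ 2 ≤ (C * ‖J w - J x‖) ^ 2 := pow_le_pow_left₀ hr.le hwJ 2
      _ ≤ C ^ 2 * (r * ‖J z - J x‖) := by rw [mul_pow]; gcongr
      _ = r * (‖J z - J x‖ * C ^ 2) := by ring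
  exact hz.not_ge (le_of_mul_le_mul_left (by rwa [← sq]) hr)

variable {Q : E →L[ℝ] E} {S : E → E} {y : E}

-- The inverse function theorem applies to `J`, whose inverse is `1 + S`; continuity of `1 + S` at
-- `y` comes from `comap_nhds_le_of_isBigO_sub`.
theorem IsProximalMap.hasFDerivAt_selection (hJ : IsProximalMap φ J)
    (hS : ∀ y, IsSubgradientAt φ y (S y)) {D : E ≃L[ℝ] E}
    (hD : HasFDerivAt J (D : E →L[ℝ] E) (y + S y)) :
    HasFDerivAt S ((D.symm : E →L[ℝ] E) - ContinuousLinearMap.id ℝ E) y := by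
  let g : E → E := fun z => z + S z
  have hleft : ∀ z, J (g z) = z := fun z => hJ.apply_add (hS z)
  have hcomap := comap_nhds_le_of_isBigO_sub hJ.norm_sub_sq_le
    (hD.isTheta_sub D.toHomeomorph.isInducing).isBigO_symm
  have hg : ContinuousAt g y := by
    refine (tendsto_comap_iff.2 ?_).mono_right hcomap
    rw [hJ.apply_add (hS y), show J ∘ g = id from funext hleft]
    exact tendsto_id
  have hinv := HasFDerivAt.of_local_left_inverse hg hD (Eventually.of_forall hleft)
  refine (hinv.sub (hasFDerivAt_id y)).congr_of_eventuallyEq (Eventually.of_forall fun z => ?_)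
  simp only [g, Pi.sub_apply, id_eq, add_sub_cancel_left]

theorem eventually_forall_abs_inner_selection_le (hS : HasFDerivAt S Q y) {η : ℝ} (hη : 0 < η) :
    ∀ᶠ z in 𝓝 y, ∀ t ∈ Icc (0 : ℝ) 1,
      |inner ℝ (S (y + t • (z - y)) - S y) (z - y) - t * inner ℝ (Q (z - y)) (z - y)| ≤
        η * ‖z - y‖ ^ 2 := by
  obtain ⟨r, hr, hbound⟩ := Metric.eventually_nhds_iff.1 (hS.isLittleO.def hη)
  filter_upwards [Metric.ball_mem_nhds y hr] with z hz t ht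
  set k := z - y
  have hle : ‖t • k‖ ≤ ‖k‖ := by
    rw [norm_smul, Real.norm_of_nonneg ht.1]
    exact mul_le_of_le_one_left (norm_nonneg _) ht.2
  have hS' : ‖S (y + t • k) - S y - Q (t • k)‖ ≤ η * ‖t • k‖ := by
    simpa only [add_sub_cancel_left] using
      hbound (y := y + t • k) (by simpa [dist_eq_norm] using hle.trans_lt (mem_ball_iff_norm.1 hz))
  calc |inner ℝ (S (y + t • k) - S y) k - t * inner ℝ (Q k) k|
      = |inner ℝ (S (y + t • k) - S y - Q (t • k)) k| := by
        rw [inner_sub_left _ (Q (t • k)), map_smul, real_inner_smul_left]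
    _ ≤ ‖S (y + t • k) - S y - Q (t • k)‖ * ‖k‖ := abs_real_inner_le_norm _ _
    _ ≤ η * ‖k‖ * ‖k‖ := by gcongr; exact hS'.trans (by gcongr)
    _ = η * ‖k‖ ^ 2 := by ring

theorem eventually_abs_sub_taylor_le_of_selection (hφ : ∀ y, IsSubgradientAt φ y (S y))
    (hS : HasFDerivAt S Q y) {η : ℝ} (hη : 0 < η) :
    ∀ᶠ z in 𝓝 y, |φ z - φ y - inner ℝ (S y) (z - y) - inner ℝ (Q (z - y)) (z - y) / 2| ≤
      η * ‖z - y‖ ^ 2 := by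
  filter_upwards [eventually_forall_abs_inner_selection_le hS hη] with z hz
  set k := z - y
  set e : ℝ → ℝ := fun t =>
    φ (y + t • k) - t * inner ℝ (S y) k - t ^ 2 / 2 * inner ℝ (Q k) k with he
  have hincr : ∀ s t : ℝ, φ (y + s • k) + (t - s) * inner ℝ (S (y + s • k)) k ≤ φ (y + t • k) := by
    intro s t
    have hst := hφ (y + s • k) (y + t • k)
    have hdiff : y + t • k - (y + s • k) = (t - s) • k := by module
    rwa [hdiff, real_inner_smul_right] at hst
  simp only [inner_sub_left] at hz
  have hupper := sub_le_of_forall_sub_le_add_sq (e := e) (A := η * ‖k‖ ^ 2)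
    (B := inner ℝ (Q k) k / 2) fun s t hs hst ht => by
      have hslope := mul_le_mul_of_nonneg_left (abs_le.1 (hz t ⟨hs.trans hst, ht⟩)).2
        (sub_nonneg.2 hst)
      simp only [he]
      linear_combination hincr t s + hslope
  have hlower := sub_le_of_forall_sub_le_add_sq (e := fun t => -e t) (A := η * ‖k‖ ^ 2)
    (B := inner ℝ (Q k) k / 2) fun s t hs hst ht => by
      have hslope := mul_le_mul_of_nonneg_left (abs_le.1 (hz s ⟨hs, hst.trans ht⟩)).1
        (sub_nonneg.2 hst)
      simp only [he]
      linear_combination hincr s t + hslope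
  have hyk : y + k = z := add_sub_cancel y z
  simp only [he, one_smul, zero_smul, add_zero, hyk] at hupper hlower
  rw [abs_le]
  constructor <;> linarith

theorem exists_isSuperjetWithin_isSubjetWithin_of_selection (hφ : ∀ y, IsSubgradientAt φ y (S y))
    (hS : HasFDerivAt S Q y) :
    ∃ π X, IsSuperjetWithin φ univ y π X ∧ IsSubjetWithin φ univ y π X := by
  let B : E →L[ℝ] E →L[ℝ] ℝ := (innerSL ℝ : E →L[ℝ] E →L[ℝ] ℝ) ∘L Q
  have hB : ∀ h k, ((1 / 2 : ℝ) • (B + B.flip)) h k =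
      (inner ℝ (Q h) k + inner ℝ (Q k) h) / 2 := fun h k => by
    change (1 / 2 : ℝ) * (inner ℝ (Q h) k + inner ℝ (Q k) h) = _
    ring
  have hsymm : ∀ h k, ((1 / 2 : ℝ) • (B + B.flip)) h k = ((1 / 2 : ℝ) • (B + B.flip)) k h :=
    fun h k => by rw [hB, hB, add_comm]
  refine ⟨innerSL ℝ (S y), (1 / 2 : ℝ) • (B + B.flip), ⟨hsymm, fun η hη => ?_⟩,
    ⟨fun h k => congrArg Neg.neg (hsymm h k), fun η hη => ?_⟩⟩ <;>
  · rw [nhdsWithin_univ]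
    filter_upwards [eventually_abs_sub_taylor_le_of_selection hφ hS hη] with z hz
    simp only [neg_apply, hB, innerSL_apply_apply]
    linarith [abs_le.1 hz]

/-- **Alexandrov's theorem**. The proximal map `J = (1 + ∂φ)⁻¹` is `1`-Lipschitz and onto, so the
points where it is not differentiable and its critical points have null images; at any other value
of `J` the subgradient `J⁻¹ - 1` is differentiable. -/
theorem ae_exists_isSuperjetWithin_isSubjetWithin [FiniteDimensional ℝ E] [MeasurableSpace E]
    [BorelSpace E] (hφ : ∀ y, ∃ p, IsSubgradientAt φ y p) :
    ∀ᵐ y ∂(Measure.hausdorffMeasure (Module.finrank ℝ E) : Measure E),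
      ∃ π X, IsSuperjetWithin φ univ y π X ∧ IsSubjetWithin φ univ y π X := by
  set μ : Measure E := Measure.hausdorffMeasure (Module.finrank ℝ E)
  obtain ⟨J, hJ⟩ := exists_isProximalMap hφ
  choose S hS using hφ
  have hnondiff : μ (J '' {x | ¬DifferentiableAt ℝ J x}) = 0 := by
    have hae : μ {x | ¬DifferentiableAt ℝ J x} = 0 := hJ.lipschitzWith.ae_differentiableAt
    have hle := (hJ.lipschitzWith.lipschitzOnWith
      (s := {x | ¬DifferentiableAt ℝ J x})).hausdorffMeasure_image_le
        (d := (Module.finrank ℝ E : ℝ)) (by positivity)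
    exact le_antisymm (hle.trans_eq (by rw [hae, mul_zero])) bot_le
  have hsingular : μ (J '' {x | DifferentiableAt ℝ J x ∧ (fderiv ℝ J x).det = 0}) = 0 :=
    addHaar_image_eq_zero_of_det_fderivWithin_eq_zero μ
      (fun x hx => hx.1.hasFDerivAt.hasFDerivWithinAt) fun x hx => hx.2
  filter_upwards [compl_mem_ae_iff.2 hnondiff, compl_mem_ae_iff.2 hsingular] with y hy₁ hy₂
  have hJy : J (y + S y) = y := hJ.apply_add (hS y)
  have hdiff : DifferentiableAt ℝ J (y + S y) := by
    by_contra hcon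
    exact hy₁ ⟨_, hcon, hJy⟩
  have hdet : (fderiv ℝ J (y + S y)).det ≠ 0 := fun hcon => hy₂ ⟨_, ⟨hdiff, hcon⟩, hJy⟩
  exact exists_isSuperjetWithin_isSubjetWithin_of_selection hS
    (hJ.hasFDerivAt_selection hS
      (D := (fderiv ℝ J (y + S y)).toContinuousLinearEquivOfDetNeZero hdet) hdiff.hasFDerivAt)

end ConvexAnalysis

/-! ### Jensen's lemma -/

section Jensen

open MeasureTheory

variable {E : Type*} [NormedAddCommGroup E] [InnerProductSpace ℝ E] {φ : E → ℝ} {C : ℝ}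

theorem norm_sq_le_of_forall_inner_le (hC : 0 < C) {d x x' : E}
    (h : ∀ y, inner ℝ d (y - x') ≤ C * ‖y - x‖ ^ 2) : ‖d‖ ^ 2 ≤ 4 * C * inner ℝ d (x' - x) := by
  have hy := h (x + (2 * C)⁻¹ • d)
  have hsplit : x + (2 * C)⁻¹ • d - x' = (2 * C)⁻¹ • d - (x' - x) := by abel
  rw [hsplit, inner_sub_right, real_inner_smul_right, real_inner_self_eq_norm_sq,
    add_sub_cancel_left, norm_smul, mul_pow, Real.norm_of_nonneg (by positivity)] at hy
  field_simp at hy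
  linarith

theorem IsSubgradientAt.eq_of_forall_le (hC : 0 < C) {x q a : E} (hq : IsSubgradientAt φ x q)
    (ha : ∀ y, φ y ≤ φ x + inner ℝ a (y - x) + C * ‖y - x‖ ^ 2) : q = a := by
  have hsq := norm_sq_le_of_forall_inner_le hC (d := q - a) (x := x) (x' := x) fun y => by
    rw [inner_sub_left]
    linarith [hq y, ha y]
  rw [sub_self, inner_zero_right, mul_zero] at hsq
  exact sub_eq_zero.1 (norm_eq_zero.1 (pow_eq_zero_iff two_ne_zero |>.1
    (le_antisymm hsq (sq_nonneg _))))

theorem IsSubgradientAt.norm_sub_le_of_forall_le (hC : 0 < C) {x x' a a' : E}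
    (hsub : IsSubgradientAt φ x a) (hsub' : IsSubgradientAt φ x' a')
    (ha : ∀ y, φ y ≤ φ x + inner ℝ a (y - x) + C * ‖y - x‖ ^ 2) :
    ‖a' - a‖ ≤ 4 * C * ‖x' - x‖ := by
  have hsq := norm_sq_le_of_forall_inner_le hC (d := a' - a) (x := x) (x' := x') fun y => by
    have hsplit : inner ℝ a (y - x') = inner ℝ a (y - x) - inner ℝ a (x' - x) := by
      rw [← inner_sub_right, sub_sub_sub_cancel_right]
    rw [inner_sub_left, hsplit]
    linarith [hsub' y, ha y, hsub x']
  have hle : ‖a' - a‖ ^ 2 ≤ ‖a' - a‖ * (4 * C * ‖x' - x‖) :=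
    calc ‖a' - a‖ ^ 2 ≤ 4 * C * inner ℝ (a' - a) (x' - x) := hsq
      _ ≤ 4 * C * (‖a' - a‖ * ‖x' - x‖) := by gcongr; exact real_inner_le_norm _ _
      _ = _ := by ring
  rcases (norm_nonneg (a' - a)).eq_or_lt with h0 | hpos
  · rw [← h0]; positivity
  · exact le_of_mul_le_mul_left (by rwa [← sq]) hpos

theorem le_add_inner_of_isMaxOn {p x : E}
    (h : IsMaxOn (fun y => φ y - C * ‖y‖ ^ 2 - inner ℝ p y) univ x) (y : E) :
    φ y ≤ φ x + inner ℝ (p + (2 * C) • x) (y - x) + C * ‖y - x‖ ^ 2 := by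
  have hy := isMaxOn_iff.1 h y (mem_univ y)
  have hnorm : ‖y‖ ^ 2 = ‖x‖ ^ 2 + 2 * inner ℝ x (y - x) + ‖y - x‖ ^ 2 := by
    rw [← norm_add_sq_real, add_sub_cancel]
  rw [inner_add_left, real_inner_smul_left, inner_sub_right p]
  linear_combination hy + C * hnorm

theorem norm_slope_sub_le_of_isMaxOn (hφ : ∀ y, ∃ q, IsSubgradientAt φ y q) (hC : 0 < C)
    {p p' x x' : E} (h : IsMaxOn (fun y => φ y - C * ‖y‖ ^ 2 - inner ℝ p y) univ x)
    (h' : IsMaxOn (fun y => φ y - C * ‖y‖ ^ 2 - inner ℝ p' y) univ x') :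
    ‖p' - p‖ ≤ 6 * C * ‖x' - x‖ := by
  obtain ⟨q, hq⟩ := hφ x
  obtain ⟨q', hq'⟩ := hφ x'
  obtain rfl := hq.eq_of_forall_le hC (le_add_inner_of_isMaxOn h)
  obtain rfl := hq'.eq_of_forall_le hC (le_add_inner_of_isMaxOn h')
  have hle := hq.norm_sub_le_of_forall_le hC hq' (le_add_inner_of_isMaxOn h)
  have hsplit : p' - p = (p' + (2 * C) • x' - (p + (2 * C) • x)) - (2 * C) • (x' - x) := by module
  rw [hsplit]
  refine (norm_sub_le _ _).trans ?_
  rw [norm_smul, Real.norm_of_nonneg (by positivity)]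
  linarith

/-- **Jensen's lemma**. The slope of the perturbation is a Lipschitz function of the maximum point,
so the maximum points do not form a null set. -/
theorem exists_isMaxOn_sub_inner_of_ae [FiniteDimensional ℝ E] [MeasurableSpace E] [BorelSpace E]
    (hφ : ∀ y, ∃ q, IsSubgradientAt φ y q) (hC : 0 < C) {δ : ℝ} (hδ : 0 < δ)
    (hmax : ∀ p, ‖p‖ < δ → ∃ x, IsMaxOn (fun y => φ y - C * ‖y‖ ^ 2 - inner ℝ p y) univ x)
    {R : E → Prop}
    (hR : ∀ᵐ x ∂(Measure.hausdorffMeasure (Module.finrank ℝ E) : Measure E), R x) :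
    ∃ p x, ‖p‖ < δ ∧ R x ∧ IsMaxOn (fun y => φ y - C * ‖y‖ ^ 2 - inner ℝ p y) univ x := by
  by_contra! hbad
  choose! x hx using hmax
  have hslope : ∀ z ∈ x '' Metric.ball 0 δ, ∃ p ∈ Metric.ball 0 δ, x p = z := fun z hz => hz
  choose! slope hslope_mem hslope using hslope
  have hlip : LipschitzOnWith (6 * C).toNNReal slope (x '' Metric.ball 0 δ) := by
    refine LipschitzOnWith.of_dist_le_mul fun z hz z' hz' => ?_
    have hle := norm_slope_sub_le_of_isMaxOn hφ hC
      (hx _ (mem_ball_zero_iff.1 (hslope_mem z' hz')))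
      (hx _ (mem_ball_zero_iff.1 (hslope_mem z hz)))
    rwa [hslope z hz, hslope z' hz', ← dist_eq_norm, ← dist_eq_norm,
      ← Real.coe_toNNReal (6 * C) (by positivity)] at hle
  have hnull : Measure.hausdorffMeasure (Module.finrank ℝ E) (x '' Metric.ball 0 δ) = 0 := by
    refine measure_mono_null ?_ hR
    rintro _ ⟨p, hp, rfl⟩ hRx
    exact hbad p (x p) (mem_ball_zero_iff.1 hp) hRx (hx p (mem_ball_zero_iff.1 hp))
  have hball : Metric.ball 0 δ ⊆ slope '' (x '' Metric.ball 0 δ) := by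
    intro p hp
    have hxp : x p ∈ x '' Metric.ball 0 δ := mem_image_of_mem x hp
    have hle := norm_slope_sub_le_of_isMaxOn hφ hC (hx p (mem_ball_zero_iff.1 hp))
      (hx _ (mem_ball_zero_iff.1 (hslope_mem _ hxp)))
    rw [hslope _ hxp, sub_self, norm_zero, mul_zero] at hle
    exact ⟨x p, hxp, sub_eq_zero.1 (norm_le_zero_iff.1 hle)⟩
  have himage : Measure.hausdorffMeasure (Module.finrank ℝ E)
      (slope '' (x '' Metric.ball 0 δ)) = 0 := by
    have hle := hlip.hausdorffMeasure_image_le (d := (Module.finrank ℝ E : ℝ)) (by positivity)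
    exact le_antisymm (hle.trans_eq (by rw [hnull, mul_zero])) bot_le
  exact (Metric.measure_ball_pos _ _ hδ).ne' (measure_mono_null hball himage)

end Jensen

/-! ### Sup-convolutions and the theorem on sums -/

section SupConvolution

open MeasureTheory

variable {E : Type*} [NormedAddCommGroup E] {U : E → ℝ} {K : Set E}
  {c : ℝ} {Y : E → E}

/-- `Y` selects, for every `x`, a maximum point over `K` of `y ↦ U y - c ‖x - y‖²`. -/
def IsSupConvolutionSelection (U : E → ℝ) (K : Set E) (c : ℝ) (Y : E → E) : Prop :=
  ∀ x, Y x ∈ K ∧ ∀ z ∈ K, U z - c * ‖x - z‖ ^ 2 ≤ U (Y x) - c * ‖x - Y x‖ ^ 2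

/-- The sup-convolution `U^c x = max_{y ∈ K} (U y - c ‖x - y‖²)`, written in terms of a selection
`Y` of maximum points. -/
def supConvolution (U : E → ℝ) (c : ℝ) (Y : E → E) (x : E) : ℝ := U (Y x) - c * ‖x - Y x‖ ^ 2

theorem exists_isSupConvolutionSelection (hK : IsCompact K) (hne : K.Nonempty)
    (hU : UpperSemicontinuousOn U K) (c : ℝ) : ∃ Y, IsSupConvolutionSelection U K c Y := by
  have hmax : ∀ x, ∃ y ∈ K, IsMaxOn (fun z => U z + -(c * ‖x - z‖ ^ 2)) K y := fun x => by
    have hquad : Continuous fun z => -(c * ‖x - z‖ ^ 2) := by fun_prop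
    exact (hU.add hquad.continuousOn.upperSemicontinuousOn).exists_isMaxOn hne hK
  choose Y hYK hY using hmax
  refine ⟨Y, fun x => ⟨hYK x, fun z hz => ?_⟩⟩
  simpa only [sub_eq_add_neg] using isMaxOn_iff.1 (hY x) z hz

namespace IsSupConvolutionSelection

theorem le_supConvolution (hY : IsSupConvolutionSelection U K c Y) (x : E) {z : E} (hz : z ∈ K) :
    U z - c * ‖x - z‖ ^ 2 ≤ supConvolution U c Y x := (hY x).2 z hz

theorem exists_forall_supConvolution_le (hY : IsSupConvolutionSelection U K c Y)
    (hK : IsCompact K) (hU : UpperSemicontinuousOn U K) (hc : 0 < c) :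
    ∃ M, ∀ x, supConvolution U c Y x ≤ M - c / 2 * ‖x‖ ^ 2 := by
  obtain ⟨M, hM⟩ := hU.bddAbove_of_isCompact hK
  obtain ⟨r, hr⟩ := hK.isBounded.exists_norm_le
  refine ⟨M + c * r ^ 2, fun x => ?_⟩
  have hUM := hM (mem_image_of_mem U (hY x).1)
  have hYr : ‖Y x‖ ^ 2 ≤ r ^ 2 := pow_le_pow_left₀ (norm_nonneg _) (hr _ (hY x).1) 2
  have hsq : ‖x‖ ^ 2 ≤ 2 * (‖x - Y x‖ ^ 2 + ‖Y x‖ ^ 2) := by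
    calc ‖x‖ ^ 2 = ‖(x - Y x) + Y x‖ ^ 2 := by rw [sub_add_cancel]
      _ ≤ (‖x - Y x‖ + ‖Y x‖) ^ 2 := by gcongr; exact norm_add_le _ _
      _ ≤ _ := add_sq_le
  unfold supConvolution
  nlinarith

variable [InnerProductSpace ℝ E]

theorem isSubgradientAt (hY : IsSupConvolutionSelection U K c Y) (x : E) :
    IsSubgradientAt (fun z => supConvolution U c Y z + c * ‖z‖ ^ 2) x ((2 * c) • Y x) := by
  intro z
  have hz := hY.le_supConvolution z (hY x).1
  rw [norm_sub_sq_real] at hz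
  rw [real_inner_smul_left, inner_sub_right, real_inner_comm z, real_inner_comm x]
  simp only [supConvolution, norm_sub_sq_real] at hz ⊢
  linear_combination hz

theorem isSuperjetWithin (hY : IsSupConvolutionSelection U K c Y) {x : E} {π : E →L[ℝ] ℝ}
    {X : E →L[ℝ] E →L[ℝ] ℝ} (h : IsSuperjetWithin (supConvolution U c Y) univ x π X) :
    IsSuperjetWithin U K (Y x) π X where
  symm := h.symm
  eventually_le η hη := by
    have hshift : Tendsto (fun z => x + (z - Y x)) (𝓝[K] Y x) (𝓝[univ] x) := by
      rw [nhdsWithin_univ]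
      simpa only [sub_self, add_zero] using
        ((by fun_prop : Continuous fun z => x + (z - Y x)).continuousWithinAt
          (s := K) (x := Y x)).tendsto
    filter_upwards [hshift.eventually (h.eventually_le η hη), self_mem_nhdsWithin] with z hz hzK
    have hle := hY.le_supConvolution (x + (z - Y x)) hzK
    have hsub : x + (z - Y x) - z = x - Y x := by abel
    rw [hsub] at hle
    rw [add_sub_cancel_left] at hz
    unfold supConvolution at hle hz
    linarith

end IsSupConvolutionSelection

variable [InnerProductSpace ℝ E]

/-- The inner product of `E` as a real bilinear form; the type of `innerSL ℝ` involves the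
conjugation of `ℝ`, which does not unify with `E →L[ℝ] E →L[ℝ] ℝ` in sums of forms. -/
noncomputable def realInnerForm (E : Type*) [NormedAddCommGroup E] [InnerProductSpace ℝ E] :
    E →L[ℝ] E →L[ℝ] ℝ := innerSL ℝ

theorem realInnerForm_apply (x y : E) : realInnerForm E x y = inner ℝ x y := rfl

theorem isSuperjetWithin_const_mul_norm_sq (c : ℝ) (x : E) :
    IsSuperjetWithin (fun z => c * ‖z‖ ^ 2) univ x ((2 * c) • realInnerForm E x)
      ((2 * c) • realInnerForm E) := by
  refine (isSuperjetWithin_apply_self_div_two (X := (2 * c) • realInnerForm E)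
    (fun h k => ?_) univ x).congr fun z => ?_
  · simp only [smul_apply, realInnerForm_apply, real_inner_comm]
  · simp only [smul_apply, smul_eq_mul, realInnerForm_apply, real_inner_self_eq_norm_sq]
    ring

theorem ae_exists_isSuperjetWithin_isSubjetWithin_of_semiconvex [FiniteDimensional ℝ E]
    [MeasurableSpace E] [BorelSpace E] {ψ : E → ℝ}
    (hψ : ∀ x, ∃ p, IsSubgradientAt (fun z => ψ z + c * ‖z‖ ^ 2) x p) :
    ∀ᵐ x ∂(Measure.hausdorffMeasure (Module.finrank ℝ E) : Measure E),
      ∃ π X, IsSuperjetWithin ψ univ x π X ∧ IsSubjetWithin ψ univ x π X := by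
  filter_upwards [ae_exists_isSuperjetWithin_isSubjetWithin hψ] with x ⟨π, X, hsup, hsub⟩
  have hsum := IsSuperjetWithin.add hsub (isSuperjetWithin_const_mul_norm_sq c x)
  refine ⟨_, _, (hsup.add (isSuperjetWithin_const_mul_norm_sq (-c) x)).congr fun z => by ring, ?_⟩
  have hψ' : IsSuperjetWithin (fun z => -ψ z) univ x _ _ := hsum.congr fun z => by ring
  rw [IsSubjetWithin]
  convert hψ' using 1 <;> module

theorem exists_isMaxOn_sub_inner [FiniteDimensional ℝ E] {ψ : E → ℝ} (hψ : Continuous ψ)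
    {M : ℝ} (hc : 0 < c) (hle : ∀ x, ψ x ≤ M - c * ‖x‖ ^ 2) (p : E) :
    ∃ x, IsMaxOn (fun y => ψ y - inner ℝ p y) univ x := by
  have hbound : ∀ y, ψ y - inner ℝ p y ≤ M + (‖p‖ - c * ‖y‖) * ‖y‖ := fun y => by
    have := (abs_le.1 (abs_real_inner_le_norm p y)).1
    linear_combination hle y + this
  have hlim : Tendsto (fun t : ℝ => M + (‖p‖ - c * t) * t) atTop atBot :=
    tendsto_atBot_add_const_left _ _ (Tendsto.atBot_mul_atTop₀
      (tendsto_atBot_add_const_left _ _ (tendsto_neg_atTop_atBot.comp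
        (tendsto_id.const_mul_atTop hc))) tendsto_id)
  obtain ⟨x, hx⟩ := (show Continuous fun y => ψ y - inner ℝ p y by fun_prop).exists_forall_ge
    (tendsto_atBot_mono hbound (hlim.comp tendsto_norm_cocompact_atTop))
  exact ⟨x, fun y _ => hx y⟩

theorem exists_supConvolution_jets [FiniteDimensional ℝ E] {Y₁ Y₂ : E → E}
    (hK : IsCompact K) (hU : UpperSemicontinuousOn U K) (hW : UpperSemicontinuousOn W K)
    (hc : 0 < c) (hY₁ : IsSupConvolutionSelection U K c Y₁)
    (hY₂ : IsSupConvolutionSelection W K c Y₂) {δ : ℝ} (hδ : 0 < δ) :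
    ∃ (p x : E) (π₁ π₂ : E →L[ℝ] ℝ) (X₁ X₂ : E →L[ℝ] E →L[ℝ] ℝ), ‖p‖ < δ ∧
      IsMaxOn (fun z => supConvolution U c Y₁ z + supConvolution W c Y₂ z - inner ℝ p z) univ x ∧
      IsSuperjetWithin (supConvolution U c Y₁) univ x π₁ X₁ ∧
      IsSuperjetWithin (supConvolution W c Y₂) univ x π₂ X₂ ∧
      π₁ + π₂ = realInnerForm E p ∧ ∀ h, X₁ h h + X₂ h h ≤ 0 := by
  have hφ₁ := hY₁.isSubgradientAt
  have hφ₂ := hY₂.isSubgradientAt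
  set φ : E → ℝ := fun z =>
    supConvolution U c Y₁ z + c * ‖z‖ ^ 2 + (supConvolution W c Y₂ z + c * ‖z‖ ^ 2)
  have hφ : ∀ x, ∃ q, IsSubgradientAt φ x q := fun x => ⟨_, (hφ₁ x).add (hφ₂ x)⟩
  have hsum : ∀ z, φ z - 2 * c * ‖z‖ ^ 2 = supConvolution U c Y₁ z + supConvolution W c Y₂ z :=
    fun z => by simp only [φ]; ring
  obtain ⟨M₁, hM₁⟩ := hY₁.exists_forall_supConvolution_le hK hU hc
  obtain ⟨M₂, hM₂⟩ := hY₂.exists_forall_supConvolution_le hK hW hc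
  have hmax : ∀ p, ‖p‖ < δ →
      ∃ x, IsMaxOn (fun y => φ y - 2 * c * ‖y‖ ^ 2 - inner ℝ p y) univ x := fun p _ =>
    exists_isMaxOn_sub_inner (ψ := fun y => φ y - 2 * c * ‖y‖ ^ 2) (M := M₁ + M₂)
      ((continuous_of_exists_isSubgradientAt hφ).sub (by fun_prop)) hc
      (fun y => by rw [hsum]; linarith [hM₁ y, hM₂ y]) p
  borelize E
  obtain ⟨p, x, hp, ⟨⟨π₁, X₁, hsup₁, hsub₁⟩, ⟨π₂, X₂, hsup₂, hsub₂⟩⟩, hx⟩ :=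
    exists_isMaxOn_sub_inner_of_ae hφ (mul_pos two_pos hc) hδ hmax
      ((ae_exists_isSuperjetWithin_isSubjetWithin_of_semiconvex fun x => ⟨_, hφ₁ x⟩).and
        (ae_exists_isSuperjetWithin_isSubjetWithin_of_semiconvex fun x => ⟨_, hφ₂ x⟩))
  simp only [hsum] at hx
  exact ⟨p, x, π₁, π₂, X₁, X₂, hp, hx, hsup₁, hsup₂,
    IsSubjetWithin.add_eq_and_add_nonpos hsub₁ hsub₂ (ℓ := realInnerForm E p) hx⟩

end SupConvolution

theorem tendsto_of_add_le_add_add {ι : Type*} {l : Filter ι} {a b δ : ι → ℝ} {A B : ℝ}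
    (ha : ∀ A' > A, ∀ᶠ k in l, a k < A') (hb : ∀ B' > B, ∀ᶠ k in l, b k < B')
    (hδ : Tendsto δ l (𝓝 0)) (hab : ∀ᶠ k in l, A + B ≤ a k + b k + δ k) : Tendsto a l (𝓝 A) := by
  refine tendsto_order.2 ⟨fun A' hA' => ?_, ha⟩
  have hε : 0 < (A - A') / 2 := by linarith
  filter_upwards [hb (B + (A - A') / 2) (by linarith), hδ.eventually_lt_const hε, hab]
    with k hbk hδk habk
  linarith

section Doubling

variable {P : Type*} [NormedAddCommGroup P] {U V : P → ℝ} {K : Set P}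

theorem tendsto_norm_sub_zero_of_penalized (hK : IsCompact K)
    (hU : UpperSemicontinuousOn U K) (hV : LowerSemicontinuousOn V K) {x y : ℕ → P} {N δ : ℕ → ℝ}
    (hx : ∀ k, x k ∈ K) (hy : ∀ k, y k ∈ K) (hN : Tendsto N atTop atTop)
    (hδ : Tendsto δ atTop (𝓝 0))
    (hle : ∀ k, ∀ z ∈ K, U z - V z + N k * ‖x k - y k‖ ^ 2 ≤ U (x k) - V (y k) + δ k) :
    Tendsto (fun k => x k - y k) atTop (𝓝 0) := by
  obtain ⟨M, hM⟩ := hU.bddAbove_of_isCompact hK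
  obtain ⟨m, hm⟩ := hV.bddBelow_of_isCompact hK
  have hbound : ∀ᶠ k in atTop,
      ‖x k - y k‖ ^ 2 ≤ (M - m - (U (x 0) - V (x 0)) + δ k) * (N k)⁻¹ := by
    filter_upwards [hN.eventually_gt_atTop 0] with k hk
    rw [← div_eq_mul_inv, le_div_iff₀ hk]
    linarith [hle k _ (hx 0), hM (mem_image_of_mem U (hx k)), hm (mem_image_of_mem V (hy k))]
  have hlim := squeeze_zero' (Eventually.of_forall fun k => sq_nonneg ‖x k - y k‖) hbound
    (by simpa only [mul_zero, Pi.inv_apply] using (hδ.const_add _).mul hN.inv_tendsto_atTop)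
  refine tendsto_zero_iff_norm_tendsto_zero.2 ?_
  simpa only [Real.sqrt_sq (norm_nonneg _), Real.sqrt_zero] using hlim.sqrt

theorem exists_isMaxOn_tendsto_of_penalized (hK : IsCompact K)
    (hU : UpperSemicontinuousOn U K) (hV : LowerSemicontinuousOn V K) {x y : ℕ → P} {N δ : ℕ → ℝ}
    (hx : ∀ k, x k ∈ K) (hy : ∀ k, y k ∈ K) (hN : Tendsto N atTop atTop)
    (hδ : Tendsto δ atTop (𝓝 0))
    (hle : ∀ k, ∀ z ∈ K, U z - V z + N k * ‖x k - y k‖ ^ 2 ≤ U (x k) - V (y k) + δ k) :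
    ∃ q ∈ K, IsMaxOn (fun z => U z - V z) K q ∧ ∃ φ : ℕ → ℕ, StrictMono φ ∧
      Tendsto (x ∘ φ) atTop (𝓝 q) ∧ Tendsto (y ∘ φ) atTop (𝓝 q) ∧
      Tendsto (U ∘ x ∘ φ) atTop (𝓝 (U q)) ∧ Tendsto (V ∘ y ∘ φ) atTop (𝓝 (V q)) := by
  obtain ⟨q, hq, φ, hφ, hxq⟩ := hK.tendsto_subseq hx
  have hyq : Tendsto (y ∘ φ) atTop (𝓝 q) := by
    simpa only [sub_zero, sub_sub_cancel, Function.comp_def] using hxq.sub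
      ((tendsto_norm_sub_zero_of_penalized hK hU hV hx hy hN hδ hle).comp hφ.tendsto_atTop)
  have hφz : ∀ z ∈ K, ∀ᶠ k in atTop,
      U z - V z ≤ (U ∘ x ∘ φ) k - (V ∘ y ∘ φ) k + (δ ∘ φ) k := fun z hz => by
    filter_upwards [(hN.comp hφ.tendsto_atTop).eventually_ge_atTop 0] with k hk
    exact (le_add_of_nonneg_right (mul_nonneg hk (sq_nonneg _))).trans (hle (φ k) z hz)
  have hδφ : Tendsto (δ ∘ φ) atTop (𝓝 0) := hδ.comp hφ.tendsto_atTop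
  have hUq : ∀ A > U q, ∀ᶠ k in atTop, (U ∘ x ∘ φ) k < A := fun A hA =>
    (tendsto_nhdsWithin_iff.2 ⟨hxq, Eventually.of_forall fun k => hx _⟩).eventually (hU q hq A hA)
  have hVq : ∀ A > -V q, ∀ᶠ k in atTop, -(V ∘ y ∘ φ) k < A := fun A hA =>
    ((tendsto_nhdsWithin_iff.2 ⟨hyq, Eventually.of_forall fun k => hy _⟩).eventually
      (hV q hq (-A) (neg_lt.1 hA))).mono fun k hk => neg_lt.2 hk
  have hUlim : Tendsto (U ∘ x ∘ φ) atTop (𝓝 (U q)) :=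
    tendsto_of_add_le_add_add hUq hVq hδφ ((hφz q hq).mono fun k hk => by linarith)
  have hVlim : Tendsto (V ∘ y ∘ φ) atTop (𝓝 (V q)) := by
    simpa only [neg_neg] using
      (tendsto_of_add_le_add_add hVq hUq hδφ ((hφz q hq).mono fun k hk => by linarith)).neg
  refine ⟨q, hq, fun z hz => ?_, φ, hφ, hxq, hyq, hUlim, hVlim⟩
  rw [mem_ofPred_eq]
  simpa only [add_zero] using ge_of_tendsto ((hUlim.sub hVlim).add hδφ) (hφz z hz)

end Doubling

section DoubledJets

variable {P : Type*} [NormedAddCommGroup P] [NormedSpace ℝ P] {U V : P → ℝ} {K : Set P}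

/-- The output of doubling the variables: a superjet of `U` at `left` and a subjet of `V` at
`right`, both relative to `K`, with ordered second-order parts. -/
structure DoubledJet (U V : P → ℝ) (K : Set P) where
  left : P
  right : P
  left_mem : left ∈ K
  right_mem : right ∈ K
  leftSlope : P →L[ℝ] ℝ
  rightSlope : P →L[ℝ] ℝ
  leftHess : P →L[ℝ] P →L[ℝ] ℝ
  rightHess : P →L[ℝ] P →L[ℝ] ℝ
  superjet : IsSuperjetWithin U K left leftSlope leftHess
  subjet : IsSubjetWithin V K right rightSlope rightHess
  hess_le : ∀ h, leftHess h h ≤ rightHess h h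

theorem inner_sub_le_of_norm_le {E : Type*} [NormedAddCommGroup E] [InnerProductSpace ℝ E]
    {p x y z : E} {ε r : ℝ} (hp : ‖p‖ ≤ ε) (hy : ‖y‖ ≤ r) (hz : ‖z‖ ≤ r) :
    inner ℝ p (z - x) ≤ ε * (2 * r + 1 + ‖x - y‖ ^ 2) := by
  have hzx : ‖z - x‖ ≤ 2 * r + ‖x - y‖ := by
    calc ‖z - x‖ = ‖z - y - (x - y)‖ := by rw [sub_sub_sub_cancel_right]
      _ ≤ ‖z‖ + ‖y‖ + ‖x - y‖ := (norm_sub_le _ _).trans (by gcongr; exact norm_sub_le _ _)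
      _ ≤ 2 * r + ‖x - y‖ := by linarith
  have hsq : ‖x - y‖ ≤ 1 + ‖x - y‖ ^ 2 := by nlinarith [sq_nonneg (‖x - y‖ - 1)]
  calc inner ℝ p (z - x) ≤ ‖p‖ * ‖z - x‖ := real_inner_le_norm _ _
    _ ≤ ε * (2 * r + 1 + ‖x - y‖ ^ 2) :=
      mul_le_mul hp (by linarith) (norm_nonneg _) ((norm_nonneg _).trans hp)

theorem DoubledJet.exists_of_innerProductSpace {E : Type*} [NormedAddCommGroup E]
    [InnerProductSpace ℝ E] [FiniteDimensional ℝ E] {U V : E → ℝ} {K : Set E} (hK : IsCompact K)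
    (hne : K.Nonempty) (hU : UpperSemicontinuousOn U K) (hV : LowerSemicontinuousOn V K)
    {N δ : ℝ} (hN : 0 < N) (hδ : 0 < δ) :
    ∃ J : DoubledJet U V K, ‖J.leftSlope - J.rightSlope‖ ≤ δ ∧
      ∀ z ∈ K, U z - V z + N * ‖J.left - J.right‖ ^ 2 ≤ U J.left - V J.right + δ := by
  have hW : UpperSemicontinuousOn (fun z => -V z) K := hV.neg
  obtain ⟨Y₁, hY₁⟩ := exists_isSupConvolutionSelection hK hne hU (4 * N)
  obtain ⟨Y₂, hY₂⟩ := exists_isSupConvolutionSelection hK hne hW (4 * N)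
  obtain ⟨r, hr₀, hr⟩ := hK.isBounded.exists_pos_norm_le
  set ε := min (min δ (2 * N)) (δ / (2 * r + 1))
  have hε : 0 < ε := by positivity
  have hεδ : ε ≤ δ := (min_le_left _ _).trans (min_le_left _ _)
  have hεN : ε ≤ 2 * N := (min_le_left _ _).trans (min_le_right _ _)
  have hεr : ε * (2 * r + 1) ≤ δ := (le_div_iff₀ (by positivity)).1 (min_le_right _ _)
  obtain ⟨p, x, π₁, π₂, X₁, X₂, hp, hx, hsup₁, hsup₂, hπ, hX⟩ :=
    exists_supConvolution_jets hK hU hW (by positivity) hY₁ hY₂ hε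
  refine ⟨⟨Y₁ x, Y₂ x, (hY₁ x).1, (hY₂ x).1, π₁, -π₂, X₁, -X₂, hY₁.isSuperjetWithin hsup₁,
    (hY₂.isSuperjetWithin hsup₂).isSubjetWithin_neg,
    fun h => by simpa only [neg_apply] using le_neg_iff_add_nonpos_right.2 (hX h)⟩,
    ?_, fun z hz => ?_⟩
  · rw [sub_neg_eq_add, hπ]
    exact (innerSL_apply_norm ℝ p).le.trans (hp.le.trans hεδ)
  · have hmax := isMaxOn_iff.1 hx z (mem_univ z)
    have hz₁ := hY₁.le_supConvolution z hz
    have hz₂ := hY₂.le_supConvolution z hz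
    rw [sub_self, norm_zero] at hz₁ hz₂
    have hpz : inner ℝ p (z - x) ≤ ε * (2 * r + 1) + ε * ‖x - Y₁ x‖ ^ 2 :=
      (inner_sub_le_of_norm_le hp.le (hr _ (hY₁ x).1) (hr z hz)).trans_eq (mul_add _ _ _)
    have hsq : ‖Y₁ x - Y₂ x‖ ^ 2 ≤ 2 * (‖x - Y₁ x‖ ^ 2 + ‖x - Y₂ x‖ ^ 2) := by
      have := parallelogram_law_with_norm ℝ (x - Y₁ x) (x - Y₂ x)
      rw [sub_sub_sub_cancel_left, norm_sub_rev] at this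
      nlinarith [norm_nonneg (x - Y₁ x + (x - Y₂ x))]
    rw [inner_sub_right] at hpz
    simp only [supConvolution] at hmax hz₁ hz₂
    linarith [mul_le_mul_of_nonneg_left hsq hN.le, mul_nonneg hN.le (sq_nonneg ‖x - Y₂ x‖),
      mul_le_mul_of_nonneg_right hεN (sq_nonneg ‖x - Y₁ x‖)]

/-- Transport of a doubled jet along a linear equivalence. -/
noncomputable def DoubledJet.ofEquiv {Q : Type*} [NormedAddCommGroup Q] [NormedSpace ℝ Q]
    (Φ : P ≃L[ℝ] Q) (J : DoubledJet (U ∘ Φ.symm) (V ∘ Φ.symm) (Φ.symm ⁻¹' K)) :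
    DoubledJet U V K where
  left := Φ.symm J.left
  right := Φ.symm J.right
  left_mem := J.left_mem
  right_mem := J.right_mem
  leftSlope := J.leftSlope ∘L (Φ : P →L[ℝ] Q)
  rightSlope := J.rightSlope ∘L (Φ : P →L[ℝ] Q)
  leftHess := J.leftHess.bilinearComp (Φ : P →L[ℝ] Q) (Φ : P →L[ℝ] Q)
  rightHess := J.rightHess.bilinearComp (Φ : P →L[ℝ] Q) (Φ : P →L[ℝ] Q)
  superjet := J.superjet.comp_equiv Φ
  subjet := J.subjet.comp_equiv Φ
  hess_le h := J.hess_le (Φ h)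

/-- The **theorem on sums** (Crandall–Ishii lemma) for the penalisation `N * ‖x - y‖ ^ 2`. -/
theorem DoubledJet.exists [FiniteDimensional ℝ P] (hK : IsCompact K) (hne : K.Nonempty)
    (hU : UpperSemicontinuousOn U K) (hV : LowerSemicontinuousOn V K) {N δ : ℝ} (hN : 0 < N)
    (hδ : 0 < δ) :
    ∃ J : DoubledJet U V K, ‖J.leftSlope - J.rightSlope‖ ≤ δ ∧
      ∀ z ∈ K, U z - V z + N * ‖J.left - J.right‖ ^ 2 ≤ U J.left - V J.right + δ := by
  let Φ : P ≃L[ℝ] EuclideanSpace ℝ (Fin (Module.finrank ℝ P)) := toEuclidean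
  set a := ‖(Φ : P →L[ℝ] EuclideanSpace ℝ (Fin (Module.finrank ℝ P)))‖ + 1
  set b := ‖(Φ.symm : EuclideanSpace ℝ (Fin (Module.finrank ℝ P)) →L[ℝ] P)‖ + 1
  have ha₁ : 1 ≤ a := le_add_of_nonneg_left (norm_nonneg _)
  have hmaps : MapsTo Φ.symm (Φ.symm ⁻¹' K) K := mapsTo_preimage _ _
  obtain ⟨J, hslope, hle⟩ := DoubledJet.exists_of_innerProductSpace
    (U := U ∘ Φ.symm) (V := V ∘ Φ.symm) (Φ.symm.toHomeomorph.isCompact_preimage.2 hK)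
    (hne.preimage Φ.symm.surjective)
    (hU.comp Φ.symm.continuous.continuousOn hmaps) (hV.comp Φ.symm.continuous.continuousOn hmaps)
    (N := N * b ^ 2) (δ := δ / a) (by positivity) (by positivity)
  refine ⟨DoubledJet.ofEquiv Φ J, ?_, fun z hz => ?_⟩
  · calc ‖J.leftSlope ∘L (Φ : P →L[ℝ] _) - J.rightSlope ∘L (Φ : P →L[ℝ] _)‖
        = ‖(J.leftSlope - J.rightSlope) ∘L (Φ : P →L[ℝ] _)‖ := by
          rw [ContinuousLinearMap.sub_comp]
      _ ≤ δ / a * a := (ContinuousLinearMap.opNorm_comp_le _ _).trans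
          (mul_le_mul hslope (le_add_of_nonneg_right one_pos.le) (norm_nonneg _) (by positivity))
      _ = δ := div_mul_cancel₀ δ (by positivity)
  · have hz' := hle (Φ z) (show Φ.symm (Φ z) ∈ K by rwa [Φ.symm_apply_apply])
    simp only [Function.comp_apply, Φ.symm_apply_apply] at hz'
    have hnorm : ‖Φ.symm J.left - Φ.symm J.right‖ ≤ b * ‖J.left - J.right‖ := by
      rw [← map_sub]
      exact ((Φ.symm : _ →L[ℝ] P).le_opNorm (J.left - J.right)).trans
        (mul_le_mul_of_nonneg_right (le_add_of_nonneg_right one_pos.le) (norm_nonneg _))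
    calc U z - V z + N * ‖Φ.symm J.left - Φ.symm J.right‖ ^ 2
        ≤ U z - V z + N * (b * ‖J.left - J.right‖) ^ 2 := by gcongr
      _ = U z - V z + N * b ^ 2 * ‖J.left - J.right‖ ^ 2 := by ring
      _ ≤ U (Φ.symm J.left) - V (Φ.symm J.right) + δ / a := hz'
      _ ≤ _ := by gcongr; exacts [le_rfl, le_rfl, div_le_self hδ.le ha₁]

theorem DoubledJet.exists_seq [FiniteDimensional ℝ P] (hK : IsCompact K) (hne : K.Nonempty)
    (hU : UpperSemicontinuousOn U K) (hV : LowerSemicontinuousOn V K) :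
    ∃ q ∈ K, IsMaxOn (fun z => U z - V z) K q ∧ ∃ J : ℕ → DoubledJet U V K,
      Tendsto (fun k => (J k).left) atTop (𝓝 q) ∧ Tendsto (fun k => (J k).right) atTop (𝓝 q) ∧
      Tendsto (fun k => U (J k).left) atTop (𝓝 (U q)) ∧
      Tendsto (fun k => V (J k).right) atTop (𝓝 (V q)) ∧
      Tendsto (fun k => (J k).leftSlope - (J k).rightSlope) atTop (𝓝 0) := by
  choose J hslope hle using fun k : ℕ => DoubledJet.exists hK hne hU hV
    (N := k + 1) (δ := 1 / ((k : ℝ) + 1)) (by positivity) (by positivity)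
  have hδ := tendsto_one_div_add_atTop_nhds_zero_nat (𝕜 := ℝ)
  have hN : Tendsto (fun k : ℕ => (k : ℝ) + 1) atTop atTop :=
    tendsto_atTop_add_const_right _ _ tendsto_natCast_atTop_atTop
  obtain ⟨q, hq, hmax, φ, hφ, hl, hr, hUl, hVr⟩ := exists_isMaxOn_tendsto_of_penalized hK hU hV
    (fun k => (J k).left_mem) (fun k => (J k).right_mem) hN hδ hle
  exact ⟨q, hq, hmax, J ∘ φ, hl, hr, hUl, hVr,
    (squeeze_zero_norm hslope hδ).comp hφ.tendsto_atTop⟩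

end DoubledJets

/-! ### Concave symmetric functions of the eigenvalues -/

section Spectral

/-- A function `f` on a set `C ⊆ ℝⁿ` for which the spectral operator `A ↦ f (λ(A))` is monotone
and concave on the Hermitian matrices with `λ(A) ∈ C`: both are symmetric, `f` is concave and
monotone, and `C` is stable under adding nonnegative vectors, which it contains. -/
structure IsConcaveSpectral {n : ℕ} (C : Set (Fin n → ℝ)) (f : (Fin n → ℝ) → ℝ) : Prop where
  add_mem : ∀ {x y}, x ∈ C → 0 ≤ y → x + y ∈ C
  mem_of_nonneg : ∀ {x}, 0 ≤ x → x ∈ C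
  comp_perm_mem : ∀ {x}, x ∈ C → ∀ σ : Equiv.Perm (Fin n), x ∘ σ ∈ C
  apply_comp_perm : ∀ {x}, x ∈ C → ∀ σ : Equiv.Perm (Fin n), f (x ∘ σ) = f x
  concaveOn : ConcaveOn ℝ C f
  monotoneOn : MonotoneOn f C

variable {n : ℕ} {Γ : Set (Fin n → ℝ)} {f : (Fin n → ℝ) → ℝ}

namespace IsGammaCone

theorem mem_of_pos (hΓ : IsGammaCone n Γ) {x : Fin n → ℝ} (hx : ∀ i, 0 < x i) : x ∈ Γ := by
  obtain ⟨-, -, -, -, -, hsub, -⟩ := hΓ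
  refine hsub fun l _ hl => Finset.sum_pos (fun s _ => Finset.prod_pos fun i _ => hx i) ?_
  simpa only [Finset.powersetCard_nonempty, Finset.card_univ, Fintype.card_fin] using hl

theorem mem_closure_of_nonneg (hΓ : IsGammaCone n Γ) {x : Fin n → ℝ} (hx : 0 ≤ x) :
    x ∈ closure Γ := by
  have hlim : Tendsto (fun t : ℝ => fun i => x i + t) (𝓝[>] 0) (𝓝 x) := by
    have hcont : Continuous fun t : ℝ => fun i => x i + t := by fun_prop
    simpa only [add_zero] using (hcont.tendsto 0).mono_left nhdsWithin_le_nhds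
  refine mem_closure_of_tendsto hlim ?_
  filter_upwards [self_mem_nhdsWithin] with t ht
  exact hΓ.mem_of_pos fun i => add_pos_of_nonneg_of_pos (hx i) ht

theorem add_mem_closure (hΓ : IsGammaCone n Γ) {x y : Fin n → ℝ} (hx : x ∈ closure Γ)
    (hy : y ∈ closure Γ) : x + y ∈ closure Γ := by
  obtain ⟨-, hconv, hcone, -⟩ := hΓ
  refine map_mem_closure₂ continuous_add hx hy fun a ha b hb => ?_
  have hmid : (1 / 2 : ℝ) • a + (1 / 2 : ℝ) • b ∈ Γ :=
    hconv ha hb (by norm_num) (by norm_num) (by norm_num)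
  convert hcone _ hmid 2 two_pos using 1
  module

theorem isConcaveSpectral (hΓ : IsGammaCone n Γ) (hf : IsHessianDensity n Γ f) :
    IsConcaveSpectral (closure Γ) f where
  add_mem hx hy := hΓ.add_mem_closure hx (hΓ.mem_closure_of_nonneg hy)
  mem_of_nonneg := hΓ.mem_closure_of_nonneg
  comp_perm_mem hx σ := by
    obtain ⟨-, -, -, hperm, -⟩ := hΓ
    have hcont : Continuous fun y : Fin n → ℝ => y ∘ σ := by fun_prop
    exact map_mem_closure (f := fun y : Fin n → ℝ => y ∘ σ) hcont hx fun y hy => hperm σ y hy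
  apply_comp_perm hx σ := hf.2.1 σ _ hx
  concaveOn := hf.2.2.1
  monotoneOn x hx y hy hxy := by
    obtain ⟨-, -, -, hstrict, -⟩ := hf
    rcases eq_or_ne x y with rfl | hne
    · exact le_rfl
    · exact (hstrict x hx y hy hxy hne).le

end IsGammaCone

theorem IsConcaveSpectral.mulVec_mem_and_le {C : Set (Fin n → ℝ)} (hf : IsConcaveSpectral C f)
    {D : Matrix (Fin n) (Fin n) ℝ} (hD : D ∈ doublyStochastic ℝ (Fin n)) {x : Fin n → ℝ}
    (hx : x ∈ C) : D.mulVec x ∈ C ∧ f x ≤ f (D.mulVec x) := by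
  obtain ⟨w, hw_nonneg, hw_sum, hw⟩ := exists_eq_sum_perm_of_mem_doublyStochastic hD
  have hDx : D.mulVec x = ∑ σ, w σ • (x ∘ σ) := by
    rw [← hw, Matrix.sum_mulVec]
    exact Finset.sum_congr rfl fun σ _ => by rw [Matrix.smul_mulVec, Matrix.permMatrix_mulVec]
  have hmem : ∀ σ ∈ Finset.univ, x ∘ (σ : Equiv.Perm (Fin n)) ∈ C :=
    fun σ _ => hf.comp_perm_mem hx σ
  rw [hDx]
  refine ⟨hf.concaveOn.1.sum_mem (fun σ _ => hw_nonneg σ) hw_sum hmem, ?_⟩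
  calc f x = ∑ σ, w σ • f (x ∘ σ) := by
        simp only [hf.apply_comp_perm hx, smul_eq_mul]
        rw [← Finset.sum_mul, hw_sum, one_mul]
    _ ≤ f (∑ σ, w σ • (x ∘ σ)) := hf.concaveOn.le_map_sum (fun σ _ => hw_nonneg σ) hw_sum hmem

theorem normSq_inner_mem_doublyStochastic {𝕜 ι E : Type*} [RCLike 𝕜] [Fintype ι] [DecidableEq ι]
    [NormedAddCommGroup E] [InnerProductSpace 𝕜 E] (a b : OrthonormalBasis ι 𝕜 E) :
    (Matrix.of fun i j => ‖inner 𝕜 (a j) (b i)‖ ^ 2) ∈ doublyStochastic ℝ ι := by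
  rw [mem_doublyStochastic_iff_sum]
  refine ⟨fun i j => sq_nonneg _, fun i => ?_, fun j => ?_⟩
  · simp only [Matrix.of_apply, a.sum_sq_norm_inner_right, b.norm_eq_one, one_pow]
  · simp only [Matrix.of_apply, b.sum_sq_norm_inner_left, a.norm_eq_one, one_pow]

theorem re_star_dotProduct_mulVec_eq_sum_eigenvalues {𝕜 ι : Type*} [RCLike 𝕜] [Fintype ι]
    [DecidableEq ι] {A : Matrix ι ι 𝕜} (hA : A.IsHermitian) (x : EuclideanSpace 𝕜 ι) :
    RCLike.re (star x.ofLp ⬝ᵥ A.mulVec x.ofLp) =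
      ∑ j, hA.eigenvalues j * ‖inner 𝕜 (hA.eigenvectorBasis j) x‖ ^ 2 := by
  set a := hA.eigenvectorBasis
  have hsymm : (Matrix.toEuclideanLin A).IsSymmetric := Matrix.isSymmetric_toEuclideanLin_iff.2 hA
  have hcoord : ∀ j, inner 𝕜 (a j) (Matrix.toEuclideanLin A x) =
      (hA.eigenvalues j : 𝕜) * inner 𝕜 (a j) x := fun j => by
    have heig : Matrix.toEuclideanLin A (a j) = (hA.eigenvalues j : 𝕜) • a j := by
      ext i
      simpa [RCLike.real_smul_eq_coe_mul] using congrFun (hA.mulVec_eigenvectorBasis j) i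
    rw [← hsymm, heig, inner_smul_left, RCLike.conj_ofReal]
  have hinner : star x.ofLp ⬝ᵥ A.mulVec x.ofLp = inner 𝕜 x (Matrix.toEuclideanLin A x) := by
    rw [EuclideanSpace.inner_eq_star_dotProduct, dotProduct_comm, Matrix.ofLp_toLpLin,
      Matrix.toLin'_apply]
  rw [hinner, ← a.sum_inner_mul_inner, map_sum]
  refine Finset.sum_congr rfl fun j _ => ?_
  rw [hcoord, mul_left_comm, RCLike.re_ofReal_mul, ← inner_conj_symm x, RCLike.conj_mul]
  norm_cast

theorem coe_le_Fop_iff {A : Matrix (Fin n) (Fin n) ℂ} {c : ℝ} :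
    (c : EReal) ≤ Fop f Γ A ↔
      ∃ hA : A.IsHermitian, hA.eigenvalues ∈ closure Γ ∧ c ≤ f hA.eigenvalues := by
  unfold Fop
  split_ifs with hA hmem
  · simp [hA, hmem]
  · simp [hmem]
  · simp [hA]

/-- The Rayleigh quotients `μ` of `A` in an eigenbasis of `B` are averages of the eigenvalues of
`A` by a doubly stochastic matrix, so `f (λ(A)) ≤ f μ`, and `(1 - s) μ + s R ≤ λ(B)`. -/
theorem IsConcaveSpectral.le_Fop (hf : IsConcaveSpectral (closure Γ) f)
    {A B : Matrix (Fin n) (Fin n) ℂ} (hB : B.IsHermitian) {c s R : ℝ} (hs0 : 0 ≤ s) (hs1 : s ≤ 1)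
    (hR : 0 ≤ R)
    (hAB : ∀ x : Fin n → ℂ, (1 - s) * (star x ⬝ᵥ A.mulVec x).re + s * R * ∑ i, ‖x i‖ ^ 2 ≤
      (star x ⬝ᵥ B.mulVec x).re)
    (hc : (c : EReal) ≤ Fop f Γ A) :
    (((1 - s) * c + s * f fun _ => R : ℝ) : EReal) ≤ Fop f Γ B := by
  obtain ⟨hA, hAmem, hcA⟩ := coe_le_Fop_iff.1 hc
  set b := hB.eigenvectorBasis
  obtain ⟨hμ, hfμ⟩ := hf.mulVec_mem_and_le
    (normSq_inner_mem_doublyStochastic hA.eigenvectorBasis b) hAmem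
  set μ := Matrix.mulVec _ hA.eigenvalues with hμ_def
  have hAb : ∀ i, (star (b i).ofLp ⬝ᵥ A.mulVec (b i).ofLp).re = μ i := fun i => by
    rw [← RCLike.re_eq_complex_re, re_star_dotProduct_mulVec_eq_sum_eigenvalues hA, hμ_def]
    exact Finset.sum_congr rfl fun j _ => mul_comm _ _
  have hBb : ∀ i, (star (b i).ofLp ⬝ᵥ B.mulVec (b i).ofLp).re = hB.eigenvalues i := fun i => by
    rw [← RCLike.re_eq_complex_re, re_star_dotProduct_mulVec_eq_sum_eigenvalues hB]
    simp [b, OrthonormalBasis.inner_eq_ite, apply_ite norm, ite_pow]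
  have hb : ∀ i, ∑ k, ‖(b i).ofLp k‖ ^ 2 = 1 := fun i => by
    rw [← EuclideanSpace.norm_sq_eq, b.norm_eq_one, one_pow]
  have hRmem : (fun _ => R : Fin n → ℝ) ∈ closure Γ := hf.mem_of_nonneg fun _ => hR
  set ν : Fin n → ℝ := (1 - s) • μ + s • fun _ => R with hν_def
  have hν : ν ∈ closure Γ := hf.concaveOn.1 hμ hRmem (by linarith) hs0 (by ring)
  have hνB : ν ≤ hB.eigenvalues := fun i => by
    simpa only [hAb, hBb, hb, mul_one, hν_def, Pi.add_apply, Pi.smul_apply, smul_eq_mul]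
      using hAB (b i).ofLp
  have hBmem : hB.eigenvalues ∈ closure Γ := by
    simpa only [add_sub_cancel] using hf.add_mem hν (sub_nonneg.2 hνB)
  refine coe_le_Fop_iff.2 ⟨hB, hBmem, ?_⟩
  calc (1 - s) * c + s * f (fun _ => R) ≤ (1 - s) * f μ + s * f fun _ => R := by
        gcongr
        exact hcA.trans hfμ
    _ ≤ f ν := hf.concaveOn.2 hμ hRmem (by linarith) hs0 (by ring)
    _ ≤ f hB.eigenvalues := hf.monotoneOn hν hBmem hνB

end Spectral

/-! ### Complex Hessians and test functions built from jets -/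

section TaylorQuadratic

variable {P : Type*} [NormedAddCommGroup P] [NormedSpace ℝ P]

/-- The quadratic polynomial with 2-jet `(c, ℓ, B)` at `y`, used as a test function. -/
noncomputable def taylorQuadratic (c : ℝ) (ℓ : P →L[ℝ] ℝ) (B : P →L[ℝ] P →L[ℝ] ℝ) (y z : P) : ℝ :=
  c + ℓ (z - y) + B (z - y) (z - y) / 2

variable {c : ℝ} {ℓ : P →L[ℝ] ℝ} {B : P →L[ℝ] P →L[ℝ] ℝ} {y : P}

theorem taylorQuadratic_self : taylorQuadratic c ℓ B y y = c := by
  simp only [taylorQuadratic, sub_self, map_zero, zero_div, add_zero]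

theorem neg_taylorQuadratic (z : P) :
    -taylorQuadratic c ℓ B y z = taylorQuadratic (-c) (-ℓ) (-B) y z := by
  simp only [taylorQuadratic, neg_apply]
  ring

theorem contDiff_taylorQuadratic : ContDiff ℝ 2 (taylorQuadratic c ℓ B y) := by
  unfold taylorQuadratic
  fun_prop

theorem hasFDerivAt_taylorQuadratic (hB : ∀ h k, B h k = B k h) (z : P) :
    HasFDerivAt (taylorQuadratic c ℓ B y) (ℓ + B (z - y)) z := by
  have hsub : HasFDerivAt (fun z : P => z - y) (ContinuousLinearMap.id ℝ P) z :=
    (hasFDerivAt_id z).sub_const y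
  have hlin := (ℓ.hasFDerivAt.comp z hsub).const_add c
  have hquad := ((B.hasFDerivAt.comp z hsub).clm_apply hsub).mul_const (2⁻¹ : ℝ)
  refine (hlin.add hquad).congr_fderiv ?_
  ext w
  simp only [ContinuousLinearMap.comp_id, Function.comp_apply, map_sub, smul_add, add_apply,
    smul_apply, sub_apply, smul_eq_mul, ContinuousLinearMap.flip_apply, hB w z, hB w y]
  ring

theorem iteratedFDeriv_two_taylorQuadratic (hB : ∀ h k, B h k = B k h) (a b : P) :
    iteratedFDeriv ℝ 2 (taylorQuadratic c ℓ B y) y ![a, b] = B a b := by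
  have hfderiv : fderiv ℝ (taylorQuadratic c ℓ B y) = fun z => ℓ + B (z - y) :=
    funext fun z => (hasFDerivAt_taylorQuadratic hB z).fderiv
  have hsnd : HasFDerivAt (fun z => ℓ + B (z - y)) B y :=
    (B.hasFDerivAt.comp y ((hasFDerivAt_id y).sub_const y)).const_add ℓ
  rw [iteratedFDeriv_two_apply, hfderiv, hsnd.fderiv]
  rfl

variable {Q : Type*} [NormedAddCommGroup Q] [NormedSpace ℝ Q] {p : Q × P}
  {ℓ' : Q × P →L[ℝ] ℝ} {B' : Q × P →L[ℝ] Q × P →L[ℝ] ℝ}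

theorem taylorQuadratic_slice (z : P) :
    taylorQuadratic c ℓ' B' p (p.1, z) =
      taylorQuadratic c (ℓ' ∘L .inr ℝ Q P) (B'.bilinearComp (.inr ℝ Q P) (.inr ℝ Q P)) p.2 z := by
  have hz : (p.1, z) - p = ((0 : Q), z - p.2) := by ext <;> simp
  simp only [taylorQuadratic, hz, ContinuousLinearMap.comp_apply,
    ContinuousLinearMap.bilinearComp_apply, ContinuousLinearMap.inr_apply]

end TaylorQuadratic

section LeviMatrix

variable {n : ℕ} {B : (Fin n → ℂ) →L[ℝ] (Fin n → ℂ) →L[ℝ] ℝ}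

/-- The complex Hessian matrix determined by a real Hessian `B` on `ℂⁿ`. -/
noncomputable def leviMatrix (B : (Fin n → ℂ) →L[ℝ] (Fin n → ℂ) →L[ℝ] ℝ) :
    Matrix (Fin n) (Fin n) ℂ :=
  fun j k =>
    (((B (Pi.single j 1) (Pi.single k 1) +
          B (Pi.single j Complex.I) (Pi.single k Complex.I)) / 4 : ℝ) : ℂ) +
      Complex.I *
        (((B (Pi.single j 1) (Pi.single k Complex.I) -
            B (Pi.single j Complex.I) (Pi.single k 1)) / 4 : ℝ) : ℂ)

theorem complexHessian_taylorQuadratic (hB : ∀ h k, B h k = B k h) (c : ℝ)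
    (ℓ : (Fin n → ℂ) →L[ℝ] ℝ) (y : Fin n → ℂ) :
    complexHessian (taylorQuadratic c ℓ B y) y = leviMatrix B := by
  funext j k
  simp only [complexHessian, iteratedFDeriv_two_taylorQuadratic hB, leviMatrix]

theorem isHermitian_leviMatrix (hB : ∀ h k, B h k = B k h) : (leviMatrix B).IsHermitian := by
  ext j k
  simp only [Matrix.conjTranspose_apply, leviMatrix, hB (Pi.single k _) (Pi.single j _)]
  simp only [star_add, star_mul', RCLike.star_def, Complex.conj_ofReal, Complex.conj_I]
  push_cast
  ring

theorem smul_star_eq_sum_re_im (x : Fin n → ℂ) (a : ℂ) :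
    a • star x = ∑ j, ((x j).re • (Pi.single j a : Fin n → ℂ) -
      (x j).im • (Pi.single j (a * Complex.I) : Fin n → ℂ)) := by
  funext k
  simp only [Finset.sum_apply, Pi.sub_apply, Pi.smul_apply, Pi.single_apply, Pi.star_apply]
  rw [Finset.sum_eq_single_of_mem k (Finset.mem_univ k) fun j _ hj => by simp [hj.symm]]
  have hconj : star (x k) = (x k).re - (x k).im * Complex.I := Complex.ext (by simp) (by simp)
  simp only [hconj, smul_eq_mul, Complex.real_smul, ↓reduceIte]
  ring

theorem re_star_dotProduct_leviMatrix_mulVec (x : Fin n → ℂ) :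
    (star x ⬝ᵥ (leviMatrix B).mulVec x).re =
      (B (star x) (star x) + B (Complex.I • star x) (Complex.I • star x)) / 4 := by
  have hx : star x = ∑ j, ((x j).re • (Pi.single j 1 : Fin n → ℂ) -
      (x j).im • (Pi.single j Complex.I : Fin n → ℂ)) := by
    simpa only [one_smul, one_mul] using smul_star_eq_sum_re_im x 1
  have hIx : Complex.I • star x = ∑ j, ((x j).re • (Pi.single j Complex.I : Fin n → ℂ) +
      (x j).im • (Pi.single j 1 : Fin n → ℂ)) := by
    simpa only [Complex.I_mul_I, Pi.single_neg, smul_neg, sub_neg_eq_add] using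
      smul_star_eq_sum_re_im x Complex.I
  have hentries : (star x ⬝ᵥ (leviMatrix B).mulVec x).re =
      ∑ j, ∑ k, (star (x j) * (leviMatrix B j k * x k)).re := by
    simp only [dotProduct, Matrix.mulVec, Finset.mul_sum, Complex.re_sum, Pi.star_apply]
  rw [hentries, hIx, hx]
  simp only [map_sum, _root_.sum_apply, map_add, map_sub, map_smul, add_apply, sub_apply,
    smul_apply, smul_eq_mul]
  rw [Finset.sum_comm, ← Finset.sum_add_distrib, Finset.sum_div]
  refine Finset.sum_congr rfl fun j _ => ?_
  simp only [Finset.mul_sum, ← Finset.sum_add_distrib, ← Finset.sum_sub_distrib, Finset.sum_div]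
  refine Finset.sum_congr rfl fun k _ => ?_
  have hre : (leviMatrix B k j).re = (B (Pi.single k 1) (Pi.single j 1) +
      B (Pi.single k Complex.I) (Pi.single j Complex.I)) / 4 := by simp [leviMatrix]
  have him : (leviMatrix B k j).im = (B (Pi.single k 1) (Pi.single j Complex.I) -
      B (Pi.single k Complex.I) (Pi.single j 1)) / 4 := by simp [leviMatrix]
  simp only [RCLike.star_def, Complex.mul_re, Complex.mul_im, Complex.conj_re, Complex.conj_im,
    hre, him]
  ring

end LeviMatrix

section EuclideanForms

variable {n : ℕ}

/-- The real part of the standard Hermitian form on `ℂⁿ`. -/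
noncomputable def hermitianForm (n : ℕ) : (Fin n → ℂ) →L[ℝ] (Fin n → ℂ) →L[ℝ] ℝ :=
  ∑ j, (realInnerForm ℂ).bilinearComp (.proj j) (.proj j)

theorem hermitianForm_apply (a b : Fin n → ℂ) :
    hermitianForm n a b = ∑ j, inner ℝ (a j) (b j) := by
  simp [hermitianForm, realInnerForm_apply]

theorem hermitianForm_comm (a b : Fin n → ℂ) : hermitianForm n a b = hermitianForm n b a := by
  simp only [hermitianForm_apply, real_inner_comm]

theorem hermitianForm_self (a : Fin n → ℂ) : hermitianForm n a a = ∑ j, ‖a j‖ ^ 2 := by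
  simp only [hermitianForm_apply, real_inner_self_eq_norm_sq]

theorem norm_sq_le_hermitianForm_self (a : Fin n → ℂ) : ‖a‖ ^ 2 ≤ hermitianForm n a a := by
  rw [hermitianForm_self]
  refine (Real.le_sqrt (norm_nonneg a) (Finset.sum_nonneg fun j _ => sq_nonneg _)).1 ?_
  refine (pi_norm_le_iff_of_nonneg (Real.sqrt_nonneg _)).2 fun i => Real.le_sqrt_of_sq_le ?_
  exact Finset.single_le_sum (f := fun j => ‖a j‖ ^ 2) (fun j _ => sq_nonneg _) (Finset.mem_univ i)

/-- The Euclidean inner product of `ℝ × ℂⁿ`, whose own norm is the sup norm. -/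
noncomputable def spaceTimeForm (n : ℕ) :
    ℝ × (Fin n → ℂ) →L[ℝ] ℝ × (Fin n → ℂ) →L[ℝ] ℝ :=
  (realInnerForm ℝ).bilinearComp (.fst ℝ ℝ _) (.fst ℝ ℝ _) +
    (hermitianForm n).bilinearComp (.snd ℝ ℝ _) (.snd ℝ ℝ _)

theorem spaceTimeForm_apply (h k : ℝ × (Fin n → ℂ)) :
    spaceTimeForm n h k = inner ℝ h.1 k.1 + hermitianForm n h.2 k.2 := rfl

theorem spaceTimeForm_comm (h k : ℝ × (Fin n → ℂ)) :
    spaceTimeForm n h k = spaceTimeForm n k h := by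
  rw [spaceTimeForm_apply, spaceTimeForm_apply, real_inner_comm, hermitianForm_comm]

theorem norm_sq_le_spaceTimeForm_self (h : ℝ × (Fin n → ℂ)) :
    ‖h‖ ^ 2 ≤ spaceTimeForm n h h := by
  have hspace := norm_sq_le_hermitianForm_self h.2
  rw [spaceTimeForm_apply, real_inner_self_eq_norm_sq, Prod.norm_def]
  rcases max_choice ‖h.1‖ ‖h.2‖ with hmax | hmax <;> rw [hmax] <;>
    linarith [sq_nonneg ‖h.1‖, sq_nonneg ‖h.2‖]

/-- The restriction of a real bilinear form on `ℝ × ℂⁿ` to the space directions. -/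
noncomputable def spatialPart (X : ℝ × (Fin n → ℂ) →L[ℝ] ℝ × (Fin n → ℂ) →L[ℝ] ℝ) :
    (Fin n → ℂ) →L[ℝ] (Fin n → ℂ) →L[ℝ] ℝ :=
  X.bilinearComp (.inr ℝ ℝ _) (.inr ℝ ℝ _)

theorem spatialPart_apply (X : ℝ × (Fin n → ℂ) →L[ℝ] ℝ × (Fin n → ℂ) →L[ℝ] ℝ)
    (a b : Fin n → ℂ) : spatialPart X a b = X (0, a) (0, b) := rfl

end EuclideanForms

section TestFunctions

variable {n : ℕ} {K D : Set (ℝ × (Fin n → ℂ))} {y : ℝ × (Fin n → ℂ)}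
  {u v : ℝ × (Fin n → ℂ) → ℝ} {π : ℝ × (Fin n → ℂ) →L[ℝ] ℝ}
  {X : ℝ × (Fin n → ℂ) →L[ℝ] ℝ × (Fin n → ℂ) →L[ℝ] ℝ} {η : ℝ}

theorem deriv_time_taylorQuadratic (hX : ∀ h k, X h k = X k h) (c : ℝ) :
    deriv (fun t => taylorQuadratic c π X y (t, y.2)) y.1 = π (1, 0) := by
  have hcurve : HasDerivAt (fun t : ℝ => (t, y.2)) (1, 0) y.1 :=
    (hasDerivAt_id y.1).prodMk (hasDerivAt_const y.1 y.2)
  have hcomp := (hasFDerivAt_taylorQuadratic (c := c) (ℓ := π) (y := y) hX y).comp_hasDerivAt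
    y.1 hcurve
  simpa only [sub_self, map_zero, add_zero, Function.comp_def] using hcomp.deriv

theorem complexHessian_space_taylorQuadratic (hX : ∀ h k, X h k = X k h) (c : ℝ) :
    complexHessian (fun z => taylorQuadratic c π X y (y.1, z)) y.2 =
      leviMatrix (spatialPart X) := by
  simp only [taylorQuadratic_slice]
  exact complexHessian_taylorQuadratic (B := spatialPart X) (fun h k => hX _ _) _ _ _

theorem IsUpperTestAt.isLowerTestAt_neg {q : ℝ × (Fin n → ℂ) → ℝ}
    (h : IsUpperTestAt (fun p => -v p) q y) : IsLowerTestAt v (fun p => -q p) y := by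
  obtain ⟨hq, hle, hsmooth⟩ := h
  refine ⟨neg_eq_iff_eq_neg.2 hq, hle.mono fun p hp => neg_le.1 hp, ?_⟩
  exact hsmooth.mono fun p hp => ⟨hp.1.fun_neg, hp.2.neg⟩

theorem IsSuperjetWithin.symm_add_smul_spaceTimeForm (h : IsSuperjetWithin u K y π X)
    (η : ℝ) (a b : ℝ × (Fin n → ℂ)) :
    (X + η • spaceTimeForm n) a b = (X + η • spaceTimeForm n) b a := by
  simp only [add_apply, smul_apply, h.symm a b, spaceTimeForm_comm a b]

theorem IsSubjetWithin.symm_sub_smul_spaceTimeForm (h : IsSubjetWithin v K y π X)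
    (η : ℝ) (a b : ℝ × (Fin n → ℂ)) :
    (X - η • spaceTimeForm n) a b = (X - η • spaceTimeForm n) b a := by
  have hab := h.symm_add_smul_spaceTimeForm η a b
  simp only [add_apply, neg_apply, smul_apply, sub_apply] at hab ⊢
  linarith

theorem IsSuperjetWithin.isUpperTestAt (h : IsSuperjetWithin u K y π X) (hK : K ∈ 𝓝 y)
    (hη : 0 < η) : IsUpperTestAt u (taylorQuadratic (u y) π (X + η • spaceTimeForm n) y) y := by
  refine ⟨taylorQuadratic_self, ?_, Eventually.of_forall fun p => ⟨?_, ?_⟩⟩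
  · filter_upwards [nhdsWithin_eq_nhds.2 hK ▸ h.eventually_le (η / 2) (half_pos hη)] with p hp
    have hnorm := mul_le_mul_of_nonneg_left (norm_sq_le_spaceTimeForm_self (p - y)) (half_pos hη).le
    simp only [taylorQuadratic, add_apply, smul_apply, smul_eq_mul]
    linarith
  · exact ((contDiff_taylorQuadratic.differentiable two_ne_zero).comp
      (by fun_prop)).differentiableAt
  · exact (contDiff_taylorQuadratic.comp (by fun_prop)).contDiffAt

theorem ParSubsolOn.le_Fop_of_isSuperjetWithin {f : (Fin n → ℝ) → ℝ} {Γ : Set (Fin n → ℝ)}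
    {G : ℝ → (Fin n → ℂ) → ℝ → ℝ} {g : (Fin n → ℂ) → ℝ} (hu : ParSubsolOn f Γ G g D u) (hy : y ∈ D)
    (h : IsSuperjetWithin u K y π X) (hK : K ∈ 𝓝 y) (hη : 0 < η) :
    ((Real.exp (π (1, 0) + G y.1 y.2 (u y)) * g y.2 : ℝ) : EReal) ≤
      Fop f Γ (leviMatrix (spatialPart (X + η • spaceTimeForm n))) := by
  have htest := hu.2 y hy _ (h.isUpperTestAt hK hη)
  rwa [deriv_time_taylorQuadratic (h.symm_add_smul_spaceTimeForm η), taylorQuadratic_self,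
    complexHessian_space_taylorQuadratic (h.symm_add_smul_spaceTimeForm η)] at htest

theorem ParSupersolOn.Fop_le_of_isSubjetWithin {f : (Fin n → ℝ) → ℝ} {Γ : Set (Fin n → ℝ)}
    {G : ℝ → (Fin n → ℂ) → ℝ → ℝ} {g : (Fin n → ℂ) → ℝ} (hv : ParSupersolOn f Γ G g D v)
    (hy : y ∈ D) (h : IsSubjetWithin v K y π X) (hK : K ∈ 𝓝 y) (hη : 0 < η) :
    Fop f Γ (leviMatrix (spatialPart (X - η • spaceTimeForm n))) ≤
      ((Real.exp (π (1, 0) + G y.1 y.2 (v y)) * g y.2 : ℝ) : EReal) := by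
  have hsymm := h.symm_sub_smul_spaceTimeForm η
  have hlower : IsLowerTestAt v (taylorQuadratic (v y) π (X - η • spaceTimeForm n) y) y := by
    convert (IsSuperjetWithin.isUpperTestAt h hK hη).isLowerTestAt_neg using 1
    funext p
    rw [neg_taylorQuadratic, neg_neg, neg_neg]
    congr 1
    module
  have htest := hv.2 y hy _ hlower
  rwa [deriv_time_taylorQuadratic hsymm, taylorQuadratic_self,
    complexHessian_space_taylorQuadratic hsymm] at htest

end TestFunctions

/-! ### The comparison principle -/

section Penalization

variable {n : ℕ} {u : ℝ × (Fin n → ℂ) → ℝ} {K : Set (ℝ × (Fin n → ℂ))} {y : ℝ × (Fin n → ℂ)}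
  {π : ℝ × (Fin n → ℂ) →L[ℝ] ℝ} {X : ℝ × (Fin n → ℂ) →L[ℝ] ℝ × (Fin n → ℂ) →L[ℝ] ℝ}
  {s κ c a τ : ℝ}

/-- The strict subsolution `(1 - s) u + s (κ |z|² - c) - a (t - τ)₊²` built from a subsolution `u`.
The last term keeps maximum points away from the final time without changing the times up to `τ`. -/
noncomputable def penalize (s κ c a τ : ℝ) (u : ℝ × (Fin n → ℂ) → ℝ) (p : ℝ × (Fin n → ℂ)) : ℝ :=
  (1 - s) * u p + s * (κ * hermitianForm n p.2 p.2 - c) - a * max (p.1 - τ) 0 ^ 2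

theorem isSuperjetWithin_const_mul_max_sq (ha : 0 ≤ a) :
    IsSuperjetWithin (fun p : ℝ × (Fin n → ℂ) => a * max (p.1 - τ) 0 ^ 2) K y
      ((2 * a * max (y.1 - τ) 0) • .fst ℝ ℝ (Fin n → ℂ))
      ((2 * a) • (realInnerForm ℝ).bilinearComp (.fst ℝ ℝ _) (.fst ℝ ℝ _)) := by
  refine .of_forall_le (fun h k => ?_) fun p => ?_
  · simp [realInnerForm_apply, mul_comm]
  · have hmax : max (p.1 - τ) 0 ^ 2 ≤ (max (y.1 - τ) 0 + (p.1 - y.1)) ^ 2 := by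
      rcases le_total (p.1 - τ) 0 with hp | hp
      · rw [max_eq_right hp, zero_pow two_ne_zero]
        positivity
      · rw [max_eq_left hp]
        exact pow_le_pow_left₀ hp (by linarith [le_max_left (y.1 - τ) 0]) 2
    simp only [smul_apply, ContinuousLinearMap.coe_fst', smul_eq_mul, map_sub,
      sub_apply, ContinuousLinearMap.bilinearComp_apply, realInnerForm_apply, RCLike.inner_apply,
      Real.ringHom_apply]
    linear_combination a * hmax

theorem exists_isSuperjetWithin_of_penalize (h : IsSuperjetWithin (penalize s κ c a τ u) K y π X)
    (hs : s < 1) (ha : 0 ≤ a) :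
    ∃ π' X', IsSuperjetWithin u K y π' X' ∧ π (1, 0) ≤ (1 - s) * π' (1, 0) ∧
      ∀ b, (1 - s) * spatialPart X' b b = spatialPart X b b - 2 * s * κ * hermitianForm n b b := by
  have hs' : 0 < 1 - s := sub_pos.2 hs
  set Z : ℝ × (Fin n → ℂ) →L[ℝ] ℝ × (Fin n → ℂ) →L[ℝ] ℝ :=
    (-(2 * s * κ)) • (hermitianForm n).bilinearComp (.snd ℝ ℝ _) (.snd ℝ ℝ _) with hZ
  have hZsymm : ∀ b d, Z b d = Z d b := fun b d => by simp [hZ, hermitianForm_comm b.2]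
  have hconst : IsSuperjetWithin (fun _ => s * c) K y 0 0 :=
    .of_forall_le (fun _ _ => rfl) fun z => by simp
  have hjet := (((h.add (isSuperjetWithin_apply_self_div_two hZsymm K y)).add
    (isSuperjetWithin_const_mul_max_sq (τ := τ) ha)).add hconst).const_mul (inv_pos.2 hs')
  refine ⟨_, _, hjet.congr fun z => ?_, ?_, fun b => ?_⟩
  · simp only [penalize, hZ, smul_apply, ContinuousLinearMap.bilinearComp_apply,
      ContinuousLinearMap.coe_snd', smul_eq_mul]
    field_simp
    ring
  · have hmax : 0 ≤ 2 * a * max (y.1 - τ) 0 := by positivity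
    rw [smul_apply, smul_eq_mul, mul_inv_cancel_left₀ hs'.ne']
    simpa [hZ] using hmax
  · rw [spatialPart_apply, smul_apply, smul_apply, smul_eq_mul, mul_inv_cancel_left₀ hs'.ne']
    simp [spatialPart_apply, hZ, sub_eq_add_neg]

theorem exists_penalize_bounds (hK : IsCompact K) {M d T₁ : ℝ} (hu : ∀ p ∈ K, -M ≤ u p)
    {p₀ : ℝ × (Fin n → ℂ)} (hT₁ : p₀.1 < T₁) (hd : 0 < d) (κ : ℝ) {N : ℝ} (hN : 0 ≤ N) :
    ∃ s ∈ Ioo (0 : ℝ) 1, ∃ c, ∃ a ≥ 0, (∀ p ∈ K, penalize s κ c a p₀.1 u p ≤ u p) ∧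
      (∀ p ∈ K, p.1 = T₁ → penalize s κ c a p₀.1 u p + N ≤ u p) ∧
      u p₀ - d < penalize s κ c a p₀.1 u p₀ := by
  obtain ⟨C, hC⟩ := hK.bddAbove_image
    (f := fun p => κ * hermitianForm n p.2 p.2) (by fun_prop)
  set W := u p₀ - (κ * hermitianForm n p₀.2 p₀.2 - (C + M))
  obtain ⟨s, hsd, hs⟩ : ∃ s : ℝ, s * W < d ∧ s ∈ Ioo (0 : ℝ) 1 := by
    have hlim : Tendsto (fun s : ℝ => s * W) (𝓝[>] 0) (𝓝 (0 * W)) :=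
      (by fun_prop : Continuous fun s : ℝ => s * W).continuousWithinAt
    exact ((hlim.eventually_lt_const (by rwa [zero_mul])).and
      (Ioo_mem_nhdsGT zero_lt_one)).exists
  set a := N / (T₁ - p₀.1) ^ 2 with ha
  have ha0 : 0 ≤ a := by positivity
  have hs0 : 0 ≤ s := hs.1.le
  have hle : ∀ p ∈ K, penalize s κ (C + M) a p₀.1 u p + a * max (p.1 - p₀.1) 0 ^ 2 ≤ u p :=
    fun p hp => by
      have hbar : κ * hermitianForm n p.2 p.2 - (C + M) ≤ u p := by
        linarith [hC (mem_image_of_mem _ hp), hu p hp]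
      unfold penalize
      linear_combination s * hbar
  refine ⟨s, hs, C + M, a, ha0, fun p hp => ?_, fun p hp hpT => ?_, ?_⟩
  · exact (le_add_of_nonneg_right (by positivity)).trans (hle p hp)
  · have hpen : a * max (p.1 - p₀.1) 0 ^ 2 = N := by
      rw [hpT, max_eq_left (sub_pos.2 hT₁).le, ha, div_mul_cancel₀]
      exact pow_ne_zero 2 (sub_pos.2 hT₁).ne'
    exact hpen ▸ hle p hp
  · simp only [penalize, sub_self, max_self]
    linear_combination hsd

theorem upperSemicontinuousOn_penalize (hu : UpperSemicontinuousOn u K) (hs : s ≤ 1) :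
    UpperSemicontinuousOn (penalize s κ c a τ u) K := by
  have hmul : UpperSemicontinuousOn (fun p => (1 - s) * u p) K :=
    (continuous_const_mul (1 - s)).comp_upperSemicontinuousOn hu
      fun _ _ h => mul_le_mul_of_nonneg_left h (sub_nonneg.2 hs)
  have hrest : Continuous fun p : ℝ × (Fin n → ℂ) =>
      s * (κ * hermitianForm n p.2 p.2 - c) - a * max (p.1 - τ) 0 ^ 2 := by fun_prop
  have hsplit : penalize s κ c a τ u = fun p => _ := funext fun p => add_sub_assoc _ _ _
  exact hsplit ▸ hmul.add hrest.continuousOn.upperSemicontinuousOn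

end Penalization

section MaximumPrinciple

variable {n : ℕ} {Γ : Set (Fin n → ℝ)} {f : (Fin n → ℝ) → ℝ}
  {G : ℝ → (Fin n → ℂ) → ℝ → ℝ} {g : (Fin n → ℂ) → ℝ} {u v : ℝ × (Fin n → ℂ) → ℝ}
  {D K : Set (ℝ × (Fin n → ℂ))} {s R c a τ : ℝ}

theorem re_star_dotProduct_leviMatrix_spatialPart_mulVec_add_smul
    (X : ℝ × (Fin n → ℂ) →L[ℝ] ℝ × (Fin n → ℂ) →L[ℝ] ℝ) (η : ℝ) (x : Fin n → ℂ) :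
    (star x ⬝ᵥ (leviMatrix (spatialPart (X + η • spaceTimeForm n))).mulVec x).re =
      (spatialPart X (star x) (star x) +
        spatialPart X (Complex.I • star x) (Complex.I • star x)) / 4 +
      η / 2 * ∑ j, ‖x j‖ ^ 2 := by
  rw [re_star_dotProduct_leviMatrix_mulVec]
  simp only [spatialPart_apply, add_apply, smul_apply, smul_eq_mul, spaceTimeForm_apply,
    inner_zero_left, hermitianForm_self, norm_star, norm_mul, Pi.smul_apply, Pi.star_apply,
    Complex.norm_I, one_mul, zero_add]
  ring

theorem re_star_dotProduct_leviMatrix_mulVec_add_le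
    {X Y : ℝ × (Fin n → ℂ) →L[ℝ] ℝ × (Fin n → ℂ) →L[ℝ] ℝ}
    (hXY : ∀ b, (1 - s) * spatialPart X b b + 2 * s * (R + 1) * hermitianForm n b b ≤
      spatialPart Y b b) (x : Fin n → ℂ) :
    (1 - s) * (star x ⬝ᵥ (leviMatrix (spatialPart (X + s • spaceTimeForm n))).mulVec x).re +
        s * R * ∑ j, ‖x j‖ ^ 2 ≤
      (star x ⬝ᵥ (leviMatrix (spatialPart (Y - s • spaceTimeForm n))).mulVec x).re := by
  have hneg : Y - s • spaceTimeForm n = Y + (-s) • spaceTimeForm n := by module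
  have hre := hXY (star x)
  have him := hXY (Complex.I • star x)
  have hnorm : hermitianForm n (star x) (star x) = ∑ j, ‖x j‖ ^ 2 := by simp [hermitianForm_self]
  have hnormI : hermitianForm n (Complex.I • star x) (Complex.I • star x) = ∑ j, ‖x j‖ ^ 2 := by
    simp [hermitianForm_self]
  have hsq : 0 ≤ s ^ 2 * ∑ j, ‖x j‖ ^ 2 := by positivity
  rw [hnorm] at hre
  rw [hnormI] at him
  rw [hneg, re_star_dotProduct_leviMatrix_spatialPart_mulVec_add_smul,
    re_star_dotProduct_leviMatrix_spatialPart_mulVec_add_smul]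
  linear_combination (hre + him) / 4 + hsq / 2

theorem DoubledJet.exp_mul_add_le (J : DoubledJet (penalize s (R + 1) c a τ u) v K)
    (hf : IsConcaveSpectral (closure Γ) f) (hs0 : 0 < s) (hs1 : s < 1) (hR : 0 ≤ R) (ha : 0 ≤ a)
    (hu : ParSubsolOn f Γ G g D u) (hv : ParSupersolOn f Γ G g D v)
    (hl : J.left ∈ D) (hr : J.right ∈ D) (hKl : K ∈ 𝓝 J.left) (hKr : K ∈ 𝓝 J.right)
    (hg : 0 ≤ g J.left.2)
    (hbig : Real.exp (G J.left.1 J.left.2 (u J.left)) * g J.left.2 + 1 ≤ f fun _ => R) :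
    Real.exp (J.leftSlope (1, 0) + G J.left.1 J.left.2 (u J.left)) * g J.left.2 + s ≤
      Real.exp (J.rightSlope (1, 0) + G J.right.1 J.right.2 (v J.right)) * g J.right.2 := by
  obtain ⟨π, X, hjet, hπ, hX⟩ := exists_isSuperjetWithin_of_penalize J.superjet hs1 ha
  have hsuper := hv.Fop_le_of_isSubjetWithin hr J.subjet hKr hs0
  have hsub := hu.le_Fop_of_isSuperjetWithin hl hjet hKl hs0
  have hform := hf.le_Fop (B := leviMatrix (spatialPart (J.rightHess - s • spaceTimeForm n)))
    (isHermitian_leviMatrix fun h k => ?_) hs0.le hs1.le hR (fun x => ?_) hsub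
  · refine le_trans ?_ (EReal.coe_le_coe_iff.1 (hform.trans hsuper))
    set γ := G J.left.1 J.left.2 (u J.left)
    have hexp : Real.exp (J.leftSlope (1, 0) + γ) ≤
        (1 - s) * Real.exp (π (1, 0) + γ) + s * Real.exp γ :=
      (Real.exp_le_exp.2 (by linear_combination hπ)).trans
        (convexOn_exp.2 (mem_univ (π (1, 0) + γ)) (mem_univ γ) (sub_nonneg.2 hs1.le) hs0.le
          (by ring))
    linear_combination g J.left.2 * hexp + s * hbig
  · exact J.subjet.symm_sub_smul_spaceTimeForm s _ _
  · refine re_star_dotProduct_leviMatrix_mulVec_add_le (fun b => ?_) x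
    have hJ : spatialPart J.leftHess b b ≤ spatialPart J.rightHess b b := J.hess_le (0, b)
    linear_combination hX b + hJ

theorem not_eventually_exp_mul_add_le {ι : Type*} {l : Filter ι} [l.NeBot] {b b' A A' : ι → ℝ}
    {L α : ℝ} (hs : 0 < s) (hb : Tendsto (fun k => b k - b' k) l (𝓝 0)) (hL : ∀ᶠ k in l, b' k ≤ L)
    (hA : Tendsto A l (𝓝 α)) (hA' : Tendsto A' l (𝓝 α)) :
    ¬ ∀ᶠ k in l, Real.exp (b k) * A k + s ≤ Real.exp (b' k) * A' k := by
  intro hle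
  have hexp : Tendsto (fun k => Real.exp (b k - b' k)) l (𝓝 1) := by
    simpa only [Real.exp_zero] using hb.rexp
  have hlim : Tendsto (fun k => Real.exp L * |A' k - Real.exp (b k - b' k) * A k|) l (𝓝 0) := by
    simpa using ((hA'.sub (hexp.mul hA)).abs).const_mul (Real.exp L)
  refine hs.not_ge (ge_of_tendsto hlim ?_)
  filter_upwards [hle, hL] with k hk hkL
  calc s ≤ Real.exp (b' k) * (A' k - Real.exp (b k - b' k) * A k) := by
        rw [mul_sub, ← mul_assoc, ← Real.exp_add, add_sub_cancel]
        linarith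
    _ ≤ Real.exp (b' k) * |A' k - Real.exp (b k - b' k) * A k| :=
        mul_le_mul_of_nonneg_left (le_abs_self _) (Real.exp_nonneg _)
    _ ≤ Real.exp L * |A' k - Real.exp (b k - b' k) * A k| := by gcongr

/-- `v` is Lipschitz in time near every point of `D`. -/
def LocallyLipschitzInTimeOn (D : Set (ℝ × (Fin n → ℂ))) (v : ℝ × (Fin n → ℂ) → ℝ) : Prop :=
  ∀ p ∈ D, ∃ ε > 0, ∃ L : ℝ, ∀ t₁ t₂ : ℝ, ∀ z : Fin n → ℂ,
    |t₁ - p.1| < ε → |t₂ - p.1| < ε → dist z p.2 < ε → |v (t₁, z) - v (t₂, z)| ≤ L * |t₁ - t₂|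

theorem LocallyLipschitzInTimeOn.exists_slope_le (hv : LocallyLipschitzInTimeOn D v)
    {q : ℝ × (Fin n → ℂ)} (hq : q ∈ D) :
    ∃ L, ∀ᶠ y in 𝓝 q, ∀ π X, K ∈ 𝓝 y → IsSubjetWithin v K y π X → π (1, 0) ≤ L := by
  obtain ⟨ε, hε, L, hL⟩ := hv q hq
  refine ⟨L, ?_⟩
  filter_upwards [Metric.ball_mem_nhds q hε] with y hy π X hK h
  rw [Metric.mem_ball, Prod.dist_eq, max_lt_iff, Real.dist_eq] at hy
  refine h.apply_le hK ?_
  have hnear : ∀ᶠ t in 𝓝[>] (0 : ℝ), |y.1 + t - q.1| < ε :=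
    nhdsWithin_le_nhds ((by fun_prop : Continuous fun t : ℝ => |y.1 + t - q.1|).tendsto' 0 _
      (by rw [add_zero]) |>.eventually_lt_const hy.1)
  filter_upwards [hnear, self_mem_nhdsWithin] with t ht ht0
  have hlip := (le_abs_self _).trans (hL (y.1 + t) y.1 y.2 ht hy.1 hy.2)
  rw [add_sub_cancel_left, abs_of_pos (mem_Ioi.1 ht0)] at hlip
  have hray : y + t • ((1, 0) : ℝ × (Fin n → ℂ)) = (y.1 + t, y.2) := by ext <;> simp
  rw [hray]
  linarith

theorem exists_isMaxOn_penalize_sub_nonpos (hf : IsConcaveSpectral (closure Γ) f)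
    (hs0 : 0 < s) (hs1 : s < 1) (hR : 0 ≤ R) (ha : 0 ≤ a)
    (hG : ContinuousOn (fun p : (ℝ × (Fin n → ℂ)) × ℝ => Real.exp (G p.1.1 p.1.2 p.2) * g p.1.2)
      (D ×ˢ univ))
    (hGm : ∀ t z, Monotone (G t z)) (hg : ∀ p ∈ D, 0 ≤ g p.2)
    (hbig : ∀ p ∈ D, Real.exp (G p.1 p.2 (u p)) * g p.2 + 1 ≤ f fun _ => R)
    (hD : IsOpen D) (hDK : D ⊆ K) (hK : IsCompact K) (hne : K.Nonempty)
    (huK : UpperSemicontinuousOn u K) (hvK : LowerSemicontinuousOn v K)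
    (hle : ∀ p ∈ K, penalize s (R + 1) c a τ u p ≤ u p)
    (hu : ParSubsolOn f Γ G g D u) (hv : ParSupersolOn f Γ G g D v)
    (hvt : LocallyLipschitzInTimeOn D v) :
    ∃ q ∈ K, IsMaxOn (fun p => penalize s (R + 1) c a τ u p - v p) K q ∧
      (q ∈ D → penalize s (R + 1) c a τ u q - v q ≤ 0) := by
  obtain ⟨q, hq, hmax, J, hl, hr, hul, hvr, hslope⟩ := DoubledJet.exists_seq hK hne
    (upperSemicontinuousOn_penalize (κ := R + 1) (c := c) (a := a) (τ := τ) huK hs1.le) hvK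
  refine ⟨q, hq, hmax, fun hqD => not_lt.1 fun hpos => ?_⟩
  obtain ⟨L, hL⟩ := hvt.exists_slope_le (K := K) hqD
  have hlD : ∀ᶠ k in atTop, (J k).left ∈ D := hl.eventually (hD.mem_nhds hqD)
  have hrD : ∀ᶠ k in atTop, (J k).right ∈ D := hr.eventually (hD.mem_nhds hqD)
  have hnhds : ∀ {p}, p ∈ D → K ∈ 𝓝 p := fun hp => mem_of_superset (hD.mem_nhds hp) hDK
  have hrhs : ∀ y : ℕ → ℝ × (Fin n → ℂ), Tendsto y atTop (𝓝 q) →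
      Tendsto (fun k => Real.exp (G (y k).1 (y k).2 (v (J k).right)) * g (y k).2) atTop
        (𝓝 (Real.exp (G q.1 q.2 (v q)) * g q.2)) := fun y hy =>
    (hG.continuousAt
      ((hD.prod isOpen_univ).mem_nhds (x := (q, v q)) ⟨hqD, mem_univ _⟩)).tendsto.comp
      (hy.prodMk_nhds hvr)
  refine not_eventually_exp_mul_add_le (L := L) hs0
    (b := fun k => (J k).leftSlope (1, 0)) (b' := fun k => (J k).rightSlope (1, 0))
    ?_ ?_ (hrhs _ hl) (hrhs _ hr) ?_
  · exact ((ContinuousLinearMap.apply ℝ ℝ ((1, 0) : ℝ × (Fin n → ℂ))).continuous.tendsto' 0 0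
      (map_zero _)).comp hslope
  · filter_upwards [hr.eventually hL, hrD] with k hk hkD
    exact hk _ _ (hnhds hkD) (J k).subjet
  · filter_upwards [hlD, hrD, (hul.sub hvr).eventually_const_lt hpos] with k hkl hkr hk
    have hvu : v (J k).right ≤ u (J k).left := (sub_pos.1 hk).le.trans (hle _ (J k).left_mem)
    have hstrict := (J k).exp_mul_add_le hf hs0 hs1 hR ha hu hv hkl hkr (hnhds hkl) (hnhds hkr)
      (hg _ hkl) (hbig _ hkl)
    rw [← mul_assoc, ← mul_assoc, ← Real.exp_add, ← Real.exp_add]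
    refine le_trans ?_ hstrict
    gcongr
    · exact hg _ hkl
    · exact hGm _ _ hvu

theorem sub_le_of_forall_notMem {M S T₁ : ℝ} {p₀ : ℝ × (Fin n → ℂ)}
    (hf : IsConcaveSpectral (closure Γ) f) (hR : 0 ≤ R)
    (hG : ContinuousOn (fun p : (ℝ × (Fin n → ℂ)) × ℝ => Real.exp (G p.1.1 p.1.2 p.2) * g p.1.2)
      (D ×ˢ univ))
    (hGm : ∀ t z, Monotone (G t z)) (hg : ∀ p ∈ D, 0 ≤ g p.2)
    (hbig : ∀ p ∈ D, Real.exp (G p.1 p.2 (u p)) * g p.2 + 1 ≤ f fun _ => R)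
    (hD : IsOpen D) (hDK : D ⊆ K) (hK : IsCompact K)
    (huK : UpperSemicontinuousOn u K) (hvK : LowerSemicontinuousOn v K) (huM : ∀ p ∈ K, -M ≤ u p)
    (hu : ParSubsolOn f Γ G g D u) (hv : ParSupersolOn f Γ G g D v)
    (hvt : LocallyLipschitzInTimeOn D v) (hS : 0 ≤ S)
    (hbdry : ∀ q ∈ K, q ∉ D → q.1 ≠ T₁ → u q - v q ≤ S) (hp₀ : p₀ ∈ K) (hpT₁ : p₀.1 < T₁) :
    u p₀ - v p₀ ≤ S := by
  have husub : UpperSemicontinuousOn (fun p => u p + -v p) K := huK.add hvK.neg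
  obtain ⟨N, hN⟩ := husub.bddAbove_of_isCompact hK
  have hN' : ∀ p ∈ K, u p - v p ≤ max N 0 := fun p hp =>
    le_max_of_le_left ((sub_eq_add_neg _ _).trans_le (hN (mem_image_of_mem _ hp)))
  by_contra! hlt
  obtain ⟨s, hs, c, a, ha, hle, hfinal, hp₀lt⟩ :=
    exists_penalize_bounds hK huM hpT₁ (sub_pos.2 hlt) (R + 1) (le_max_right N 0)
  obtain ⟨q, hq, hmax, hqD⟩ := exists_isMaxOn_penalize_sub_nonpos hf hs.1 hs.2 hR ha hG hGm hg
    hbig hD hDK hK ⟨p₀, hp₀⟩ huK hvK hle hu hv hvt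
  have hSq : S < penalize s (R + 1) c a p₀.1 u q - v q :=
    lt_of_lt_of_le (by linarith) (isMaxOn_iff.1 hmax p₀ hp₀)
  have hqD' : q ∉ D := fun h => by linarith [hqD h]
  have hqT : q.1 ≠ T₁ := fun h => by linarith [hfinal q hq h, hN' q hq]
  linarith [hle q hq, hbdry q hq hqD' hqT]

end MaximumPrinciple

section Comparison

variable {n : ℕ} {Ω : Set (Fin n → ℂ)} {T : ℝ}

theorem ParSubsolOn.mono {f : (Fin n → ℝ) → ℝ} {Γ : Set (Fin n → ℝ)}
    {G : ℝ → (Fin n → ℂ) → ℝ → ℝ} {g : (Fin n → ℂ) → ℝ} {u : ℝ × (Fin n → ℂ) → ℝ}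
    {D D' : Set (ℝ × (Fin n → ℂ))} (h : ParSubsolOn f Γ G g D u) (hD : D' ⊆ D) :
    ParSubsolOn f Γ G g D' u :=
  ⟨h.1.mono hD, fun p hp => h.2 p (hD hp)⟩

theorem ParSupersolOn.mono {f : (Fin n → ℝ) → ℝ} {Γ : Set (Fin n → ℝ)}
    {G : ℝ → (Fin n → ℂ) → ℝ → ℝ} {g : (Fin n → ℂ) → ℝ} {v : ℝ × (Fin n → ℂ) → ℝ}
    {D D' : Set (ℝ × (Fin n → ℂ))} (h : ParSupersolOn f Γ G g D v) (hD : D' ⊆ D) :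
    ParSupersolOn f Γ G g D' v :=
  ⟨h.1.mono hD, fun p hp => h.2 p (hD hp)⟩

/-- The parabolic boundary `∂_P Ω_T`. -/
def parabolicBoundary (T : ℝ) (Ω : Set (Fin n → ℂ)) : Set (ℝ × (Fin n → ℂ)) :=
  ({0} ×ˢ closure Ω) ∪ (Ioo 0 T ×ˢ frontier Ω)

theorem parabolicBoundary_subset (hT : 0 < T) :
    parabolicBoundary T Ω ⊆ Ico 0 T ×ˢ closure Ω :=
  union_subset (prod_mono (singleton_subset_iff.2 ⟨le_rfl, hT⟩) Subset.rfl)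
    (prod_mono Ioo_subset_Ico_self frontier_subset_closure)

theorem mem_parabolicBoundary_of_notMem (hΩ : IsOpen Ω) {T₁ : ℝ} (hT₁ : T₁ < T)
    {q : ℝ × (Fin n → ℂ)} (hq : q ∈ Icc 0 T₁ ×ˢ closure Ω) (hqD : q ∉ Ioo 0 T₁ ×ˢ Ω)
    (hqT : q.1 ≠ T₁) : q ∈ parabolicBoundary T Ω := by
  obtain ⟨⟨hq0, hq1⟩, hqΩ⟩ := hq
  rcases hq0.eq_or_lt with h0 | h0
  · exact Or.inl ⟨h0.symm, hqΩ⟩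
  · refine Or.inr ⟨⟨h0, hq1.trans_lt hT₁⟩, ?_⟩
    rw [hΩ.frontier_eq]
    exact ⟨hqΩ, fun hΩq => hqD ⟨⟨h0, hq1.lt_of_ne hqT⟩, hΩq⟩⟩

theorem exists_forall_exp_mul_add_one_le {f : (Fin n → ℝ) → ℝ} {G : ℝ → (Fin n → ℂ) → ℝ → ℝ}
    {g : (Fin n → ℂ) → ℝ} {u : ℝ × (Fin n → ℂ) → ℝ} {M : ℝ} (hΩ : Bornology.IsBounded Ω)
    (hGc : ContinuousOn (fun p : ℝ × (Fin n → ℂ) × ℝ => G p.1 p.2.1 p.2.2)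
      (Icc 0 T ×ˢ closure Ω ×ˢ univ))
    (hGm : ∀ t z, Monotone (G t z)) (hg0 : ∀ z ∈ Ω, 0 ≤ g z) (hgb : ∃ C, ∀ z ∈ Ω, g z ≤ C)
    (hflim : Tendsto (fun R : ℝ => f fun _ => R) atTop atTop) (hu : ∀ p ∈ Ioo 0 T ×ˢ Ω, u p ≤ M) :
    ∃ R ≥ 0, ∀ p ∈ Ioo 0 T ×ˢ Ω, Real.exp (G p.1 p.2 (u p)) * g p.2 + 1 ≤ f fun _ => R := by
  have hGM : ContinuousOn (fun p : ℝ × (Fin n → ℂ) => G p.1 p.2 M) (Icc 0 T ×ˢ closure Ω) :=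
    hGc.comp (f := fun p : ℝ × (Fin n → ℂ) => (p.1, p.2, M)) (by fun_prop)
      fun p hp => ⟨hp.1, hp.2, mem_univ _⟩
  obtain ⟨B, hB⟩ := (isCompact_Icc.prod hΩ.isCompact_closure).bddAbove_image hGM
  obtain ⟨C, hC⟩ := hgb
  obtain ⟨R, hRf, hR⟩ := ((hflim.eventually_ge_atTop (Real.exp B * C + 1)).and
    (eventually_ge_atTop 0)).exists
  refine ⟨R, hR, fun p hp => le_trans ?_ hRf⟩
  have hGB : G p.1 p.2 (u p) ≤ B := (hGm _ _ (hu p hp)).trans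
    (hB (mem_image_of_mem _ ⟨Ioo_subset_Icc_self hp.1, subset_closure hp.2⟩))
  gcongr
  · exact hg0 _ hp.2
  · exact hC _ hp.2

theorem continuousOn_exp_mul {G : ℝ → (Fin n → ℂ) → ℝ → ℝ} {g : (Fin n → ℂ) → ℝ}
    (hGc : ContinuousOn (fun p : ℝ × (Fin n → ℂ) × ℝ => G p.1 p.2.1 p.2.2)
      (Icc 0 T ×ˢ closure Ω ×ˢ univ)) (hgc : ContinuousOn g Ω) :
    ContinuousOn (fun p : (ℝ × (Fin n → ℂ)) × ℝ => Real.exp (G p.1.1 p.1.2 p.2) * g p.1.2)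
      ((Ioo 0 T ×ˢ Ω) ×ˢ univ) :=
  (hGc.comp (f := fun p : (ℝ × (Fin n → ℂ)) × ℝ => (p.1.1, p.1.2, p.2)) (by fun_prop)
      fun _ hp => ⟨Ioo_subset_Icc_self hp.1.1, subset_closure hp.1.2, hp.2⟩).rexp.mul
    (hgc.comp (by fun_prop) fun _ hp => hp.1.2)

theorem max_sub_zero_le_sSup_parabolicBoundary {u v : ℝ × (Fin n → ℂ) → ℝ} {Cu Cv : ℝ}
    (hT : 0 < T) (hu : ∀ p ∈ Ico 0 T ×ˢ closure Ω, |u p| ≤ Cu)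
    (hv : ∀ p ∈ Ico 0 T ×ˢ closure Ω, |v p| ≤ Cv) {q : ℝ × (Fin n → ℂ)}
    (hq : q ∈ parabolicBoundary T Ω) :
    max (u q - v q) 0 ≤ sSup ((fun q => max (u q - v q) 0) '' parabolicBoundary T Ω) := by
  refine le_csSup ⟨Cu + Cv, forall_mem_image.2 fun p hp => ?_⟩ (mem_image_of_mem _ hq)
  have hup := abs_le.1 (hu p (parabolicBoundary_subset hT hp))
  have hvp := abs_le.1 (hv p (parabolicBoundary_subset hT hp))
  exact max_le (by linarith) (by linarith)

end Comparison

theorem stmt14_general {n : ℕ} (Γ : Set (Fin n → ℝ)) (f : (Fin n → ℝ) → ℝ)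
    (hf : IsConcaveSpectral (closure Γ) f)
    (Ω : Set (Fin n → ℂ)) (hΩo : IsOpen Ω) (hΩb : Bornology.IsBounded Ω) (T : ℝ)
    (G : ℝ → (Fin n → ℂ) → ℝ → ℝ)
    (hGc : ContinuousOn (fun p : ℝ × (Fin n → ℂ) × ℝ => G p.1 p.2.1 p.2.2)
      (Icc 0 T ×ˢ closure Ω ×ˢ univ))
    (hGm : ∀ t z, Monotone (G t z))
    (g : (Fin n → ℂ) → ℝ) (hgc : ContinuousOn g Ω)
    (hg0 : ∀ z ∈ Ω, 0 ≤ g z) (hgb : ∃ C, ∀ z ∈ Ω, g z ≤ C)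
    (hflim : Tendsto (fun R : ℝ => f fun _ => R) atTop atTop)
    (u v : ℝ × (Fin n → ℂ) → ℝ)
    (husc : UpperSemicontinuousOn u (Ico 0 T ×ˢ closure Ω))
    (hub : ∃ C, ∀ p ∈ Ico 0 T ×ˢ closure Ω, |u p| ≤ C)
    (hvlsc : LowerSemicontinuousOn v (Ico 0 T ×ˢ closure Ω))
    (hvb : ∃ C, ∀ p ∈ Ico 0 T ×ˢ closure Ω, |v p| ≤ C)
    (hsub : ParSubsolOn f Γ G g (Ioo 0 T ×ˢ Ω) u)
    (hsup : ParSupersolOn f Γ G g (Ioo 0 T ×ˢ Ω) v)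
    (hvlip : LocallyLipschitzInTimeOn (Ioo 0 T ×ˢ Ω) v) :
    ∀ p ∈ Ioo 0 T ×ˢ Ω,
      u p - v p ≤ sSup ((fun q => max (u q - v q) 0) '' parabolicBoundary T Ω) := by
  intro p₀ hp₀
  obtain ⟨Cu, hCu⟩ := hub
  obtain ⟨Cv, hCv⟩ := hvb
  obtain ⟨R, hR, hbig⟩ := exists_forall_exp_mul_add_one_le hΩb hGc hGm hg0 hgb hflim
    fun p hp => (abs_le.1 (hCu p ⟨Ioo_subset_Ico_self hp.1, subset_closure hp.2⟩)).2
  obtain ⟨T₁, hpT₁, hT₁⟩ := exists_between hp₀.1.2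
  have hT : 0 < T := hp₀.1.1.trans hp₀.1.2
  have hDK : Ioo 0 T₁ ×ˢ Ω ⊆ Icc 0 T₁ ×ˢ closure Ω := prod_mono Ioo_subset_Icc_self subset_closure
  have hKT : Icc 0 T₁ ×ˢ closure Ω ⊆ Ico 0 T ×ˢ closure Ω :=
    prod_mono (Icc_subset_Ico_right hT₁) Subset.rfl
  have hDT : Ioo 0 T₁ ×ˢ Ω ⊆ Ioo 0 T ×ˢ Ω := prod_mono (Ioo_subset_Ioo_right hT₁.le) Subset.rfl
  refine sub_le_of_forall_notMem hf hR
    ((continuousOn_exp_mul hGc hgc).mono (prod_mono hDT Subset.rfl)) hGm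
    (fun p hp => hg0 _ hp.2) (fun p hp => hbig p (hDT hp)) (isOpen_Ioo.prod hΩo) hDK
    (isCompact_Icc.prod hΩb.isCompact_closure) (husc.mono hKT) (hvlsc.mono hKT)
    (fun p hp => (abs_le.1 (hCu p (hKT hp))).1) (hsub.mono hDT) (hsup.mono hDT)
    (fun p hp => hvlip p (hDT hp))
    (Real.sSup_nonneg (forall_mem_image.2 fun _ _ => le_max_right _ _))
    (fun q hq hqD hqT => ?_) (hDK ⟨⟨hp₀.1.1, hpT₁⟩, hp₀.2⟩) hpT₁
  exact (le_max_left _ _).trans (max_sub_zero_le_sSup_parabolicBoundary hT hCu hCv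
    (mem_parabolicBoundary_of_notMem hΩo hT₁ hq hqD hqT))

/-- comparison principle for sub/supersolutions that are locally Lipschitz in time. -/
theorem stmt14
    {n : ℕ} (hn : 1 ≤ n) (Γ : Set (Fin n → ℝ)) (f : (Fin n → ℝ) → ℝ)
    (hΓ : IsGammaCone n Γ) (hf : IsHessianDensity n Γ f)
    (Ω : Set (Fin n → ℂ)) (hΩo : IsOpen Ω) (hΩb : Bornology.IsBounded Ω)
    (hΩc : IsConnected Ω) (T : ℝ) (hT : 0 < T)
    (G : ℝ → (Fin n → ℂ) → ℝ → ℝ)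
    (hGc : ContinuousOn (fun p : ℝ × (Fin n → ℂ) × ℝ => G p.1 p.2.1 p.2.2)
      (Set.Icc 0 T ×ˢ closure Ω ×ˢ Set.univ))
    (hGm : ∀ t z, Monotone (fun r => G t z r))
    (g : (Fin n → ℂ) → ℝ) (hgc : ContinuousOn g Ω)
    (hg0 : ∀ z ∈ Ω, 0 ≤ g z) (hgb : ∃ C, ∀ z ∈ Ω, g z ≤ C)
    (hflim : Filter.Tendsto (fun R : ℝ => f (fun _ => R)) Filter.atTop Filter.atTop)
    (u v : ℝ × (Fin n → ℂ) → ℝ)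
    (husc : UpperSemicontinuousOn u (Set.Ico 0 T ×ˢ closure Ω))
    (hub : ∃ C, ∀ p ∈ Set.Ico 0 T ×ˢ closure Ω, |u p| ≤ C)
    (hvlsc : LowerSemicontinuousOn v (Set.Ico 0 T ×ˢ closure Ω))
    (hvb : ∃ C, ∀ p ∈ Set.Ico 0 T ×ˢ closure Ω, |v p| ≤ C)
    (hsub : ParSubsolOn f Γ G g (Set.Ioo 0 T ×ˢ Ω) u)
    (hsup : ParSupersolOn f Γ G g (Set.Ioo 0 T ×ˢ Ω) v)
    (hulip : ∀ p ∈ Set.Ioo 0 T ×ˢ Ω, ∃ ε > 0, ∃ L : ℝ, ∀ t₁ t₂ : ℝ, ∀ z : Fin n → ℂ,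
      |t₁ - p.1| < ε → |t₂ - p.1| < ε → dist z p.2 < ε →
      |u (t₁, z) - u (t₂, z)| ≤ L * |t₁ - t₂|)
    (hvlip : ∀ p ∈ Set.Ioo 0 T ×ˢ Ω, ∃ ε > 0, ∃ L : ℝ, ∀ t₁ t₂ : ℝ, ∀ z : Fin n → ℂ,
      |t₁ - p.1| < ε → |t₂ - p.1| < ε → dist z p.2 < ε →
      |v (t₁, z) - v (t₂, z)| ≤ L * |t₁ - t₂|) :
    ∀ p ∈ Set.Ioo 0 T ×ˢ Ω,
      u p - v p ≤ sSup ((fun q => max (u q - v q) 0) ''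
        ((({0} : Set ℝ) ×ˢ closure Ω) ∪ (Set.Ioo 0 T ×ˢ frontier Ω))) := by
  exact stmt14_general Γ f (hΓ.isConcaveSpectral hf) Ω hΩo hΩb T G hGc hGm g hgc hg0 hgb hflim u v
    husc hub hvlsc hvb hsub hsup hvlip
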